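/- Let n, d be integers and r = 1 or r = -1 such that n + r ≥ d ≥ 3, gcd(n,d) = 1, and n ≡ -r (mod d), and let M = (dn-n-r)/d or M = n-1. Then, modulo [n]*Phi_n(q)^5, sum_{k=0}^{M} [2dk+r] ((q^r;q^d)_k^6 / (q^d;q^d)_k^6) q^{(2d-3r)k} ≡ [dn-n] q^{r(r+n-dn)/d} * ((q^{2r};q^d)_{(dn-n-r)/d} / (q^d;q^d)_{(dn-n-r)/d}) * sum_{k=0}^{(dn-n-r)/d} ((q^r;q^d)_k^3 (q^{d-r};q^d)_k q^{dk} / ((q^d;q^d)_k^3 (q^{2r};q^d)_k)) * ( 1 - [dn-n]^2 (2 - q^{dn-n}) * sum_{j=1}^{k} ( q^{dj}/[dj]^2 + q^{dj-d+r}/[dj-d+r]^2 ) ). -/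

import Mathlib

open Finset

/-- The generator `q` of the field `ℚ(q)` of rational functions. -/
noncomputable def q : RatFunc ℚ := RatFunc.X

/-- The `q`-integer `[r] = (1 - q^r)/(1 - q)`. -/
noncomputable def qint (r : ℤ) : RatFunc ℚ := (1 - q ^ r) / (1 - q)

/-- The `q`-shifted factorial `(x; b)_m = (1-x)(1-xb)⋯(1-x b^(m-1))`. -/
noncomputable def qpoch (x b : RatFunc ℚ) (m : ℕ) : RatFunc ℚ :=
  ∏ i ∈ Finset.range m, (1 - x * b ^ i)

/-- `f ≡ g (mod P)`: `f - g = P * (r/s)` with `s` coprime to `P`. -/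
def qcong (f g : RatFunc ℚ) (P : Polynomial ℚ) : Prop :=
  ∃ r s : Polynomial ℚ, IsCoprime s P ∧
    f - g = algebraMap (Polynomial ℚ) (RatFunc ℚ) P *
      (algebraMap (Polynomial ℚ) (RatFunc ℚ) r / algebraMap (Polynomial ℚ) (RatFunc ℚ) s)

/-!
Write `N = dn - n = da + r` with `a = (dn-n-r)/d`. Splitting the summand on the left as
`c_0 ψ_0 ψ_0`, with `ψ_0 = ((q^r;q^d)_k / (q^d;q^d)_k)^2`, and shifting the parameters gives a
family `F(x, y, z) = Σ c_z ψ_x ψ_y` whose value `F(0, 0, 0)` is the left hand side. Watson's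
transformation of a terminating very-well-poised `₈φ₇` into a balanced `₄φ₃` evaluates the members
with `x = N` or `z = -N`. With the second difference `D(z) = Σ c_z (ψ_N - ψ_0)^2` one has

  `F(0, 0, 0) = 2 F(N, 0, 0) - F(N, N, 0) + D(0)`.

The evaluated part is congruent to the right hand side modulo `Φ_n^6`, and `D(-N) ≡ 0` because
Watson's form of it has three visible factors of order two. In `D(0) - D(-N)` the expansion in
powers of `q^N - 1` gives order five, and the coefficient vanishes modulo `Φ_n` because it is
antisymmetric under `k ↦ a - k`. For a proper divisor `m > 1` of `n` the same reflection, on blocks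
of length `m`, makes the left hand side vanish modulo `Φ_m`; the right hand side vanishes there by
counting cyclotomic factors.
-/

section Watson

variable {K : Type*} [Field K]

/-- The `q`-shifted factorial `(x; p)_k` over an arbitrary field. -/
def qPochhammer (x p : K) (k : ℕ) : K := ∏ i ∈ range k, (1 - x * p ^ i)

@[simp]
theorem qPochhammer_zero (x p : K) : qPochhammer x p 0 = 1 := by simp [qPochhammer]

theorem qPochhammer_succ (x p : K) (k : ℕ) :
    qPochhammer x p (k + 1) = qPochhammer x p k * (1 - x * p ^ k) :=
  prod_range_succ _ _

theorem qPochhammer_succ' (x p : K) (k : ℕ) :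
    qPochhammer x p (k + 1) = (1 - x) * qPochhammer (x * p) p k := by
  simp only [qPochhammer, prod_range_succ', pow_zero, mul_one, mul_comm (1 - x), pow_succ',
    mul_assoc]

theorem one_sub_mul_pow_ne_zero {x p : K} (h : ∀ k, qPochhammer x p k ≠ 0) (k : ℕ) :
    1 - x * p ^ k ≠ 0 :=
  right_ne_zero_of_mul (qPochhammer_succ x p k ▸ h (k + 1))

theorem qPochhammer_inv_pow_eq_zero {p : K} (hp : p ≠ 0) {k j : ℕ} (h : k < j) :
    qPochhammer (p ^ k)⁻¹ p j = 0 :=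
  prod_eq_zero (mem_range.2 h) (by rw [inv_mul_cancel₀ (pow_ne_zero _ hp), sub_self])

theorem qPochhammer_inv_pow_succ {p : K} (hp : p ≠ 0) (k j : ℕ) :
    qPochhammer (p ^ (k + 1))⁻¹ p (j + 1) =
      (1 - (p ^ (k + 1))⁻¹) * qPochhammer (p ^ k)⁻¹ p j := by
  rw [qPochhammer_succ', pow_succ, mul_inv, mul_assoc, inv_mul_cancel₀ hp, mul_one]

theorem qPochhammer_mul_pow_succ (x p : K) (k j : ℕ) :
    qPochhammer (x * p ^ k) p (j + 1) = (1 - x * p ^ k) * qPochhammer (x * p ^ (k + 1)) p j := by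
  rw [qPochhammer_succ', pow_succ, mul_assoc]

/-- The `j`-th term of the terminating balanced `₃φ₂` series in the `q`-Saalschütz sum, with the
third numerator parameter `g = ap/(bc)`, so that the lower parameters `ap/b` and `ap/c` become
`c * g` and `b * g`. -/
def saalschutzTerm (p a b c g : K) (k j : ℕ) : K :=
  qPochhammer (p ^ k)⁻¹ p j * qPochhammer (a * p ^ k) p j * qPochhammer g p j * p ^ j /
    (qPochhammer p p j * qPochhammer (c * g) p j * qPochhammer (b * g) p j)

section Saalschutz

variable {p a b c g : K} (hp : p ≠ 0) (ha : a * p = b * c * g)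
  (h₁ : ∀ k, qPochhammer p p k ≠ 0) (h₂ : ∀ k, qPochhammer (c * g) p k ≠ 0)
  (h₃ : ∀ k, qPochhammer (b * g) p k ≠ 0)
include hp ha h₁ h₂ h₃

theorem sum_saalschutzTerm_succ_sub (k J : ℕ) :
    ∑ j ∈ range (J + 1),
      ((1 - c * g * p ^ k) * (1 - b * g * p ^ k) * saalschutzTerm p a b c g (k + 1) j -
        (1 - b * p ^ k) * (1 - c * p ^ k) * g * saalschutzTerm p a b c g k j) =
      (1 - g) * (1 - a * p ^ (2 * k + 1)) * qPochhammer (p ^ k)⁻¹ p J *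
        qPochhammer (a * p ^ (k + 1)) p J * qPochhammer (g * p) p J /
        (qPochhammer p p J * qPochhammer (c * g) p J * qPochhammer (b * g) p J) := by
  obtain rfl : a = b * c * g / p := eq_div_of_mul_eq hp ha
  induction J with
  | zero => simp [saalschutzTerm]; field_simp; ring
  | succ J ih =>
    have hy₁ := one_sub_mul_pow_ne_zero h₁ J
    have hy₂ := one_sub_mul_pow_ne_zero h₂ J
    have hy₃ := one_sub_mul_pow_ne_zero h₃ J
    have hJ₁ := h₁ J
    rw [sum_range_succ, ih]
    simp only [saalschutzTerm]
    rw [qPochhammer_inv_pow_succ hp, qPochhammer_mul_pow_succ _ _ k, qPochhammer_succ' g]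
    simp only [qPochhammer_succ _ _ J, pow_succ, pow_mul', pow_zero, one_mul]
    have hP : p ^ k ≠ 0 := pow_ne_zero _ hp
    generalize y₁_def : 1 - p * p ^ J = y₁ at *
    generalize y₂_def : 1 - c * g * p ^ J = y₂ at *
    generalize y₃_def : 1 - b * g * p ^ J = y₃ at *
    clear h₁ h₂ h₃ ih
    field_simp
    subst y₁_def y₂_def y₃_def
    ring

theorem sum_saalschutzTerm {k m : ℕ} (hk : k ≤ m) :
    ∑ j ∈ range (m + 1), saalschutzTerm p a b c g k j =
      qPochhammer b p k * qPochhammer c p k * g ^ k /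
        (qPochhammer (c * g) p k * qPochhammer (b * g) p k) := by
  induction k with
  | zero =>
    rw [sum_eq_single_of_mem 0 (by simp)]
    · simp [saalschutzTerm]
    · intro j _ hj
      simp only [saalschutzTerm, qPochhammer_inv_pow_eq_zero hp (Nat.pos_of_ne_zero hj),
        zero_mul, zero_div]
  | succ k ih =>
    have hy₂ := one_sub_mul_pow_ne_zero h₂ k
    have hy₃ := one_sub_mul_pow_ne_zero h₃ k
    have hrec := sum_saalschutzTerm_succ_sub hp ha h₁ h₂ h₃ k m
    rw [qPochhammer_inv_pow_eq_zero hp hk, sum_sub_distrib, ← mul_sum, ← mul_sum,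
      ih (by omega)] at hrec
    simp only [mul_zero, zero_mul, zero_div] at hrec
    apply mul_left_cancel₀ (mul_ne_zero hy₂ hy₃)
    rw [sub_eq_zero.1 hrec]
    simp only [qPochhammer_succ]
    generalize 1 - c * g * p ^ k = y₂ at *
    generalize 1 - b * g * p ^ k = y₃ at *
    have hk₂ := h₂ k
    have hk₃ := h₃ k
    field_simp
    ring

end Saalschutz

theorem one_sub_pow_mul_inv_pow_ne_zero {p : K} (hp : p ≠ 0) (h : ∀ k, qPochhammer p p k ≠ 0)
    {j m : ℕ} (hj : j < m) : 1 - p ^ j * (p ^ m)⁻¹ ≠ 0 := by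
  obtain ⟨i, rfl⟩ := Nat.exists_eq_add_of_lt hj
  intro h0
  have hpow : p ^ j = p ^ (j + i + 1) :=
    (mul_inv_eq_one₀ (pow_ne_zero _ hp)).1 (sub_eq_zero.1 h0).symm
  refine one_sub_mul_pow_ne_zero h i (sub_eq_zero.2 ?_)
  rwa [add_assoc, pow_add, pow_succ', left_eq_mul₀ (pow_ne_zero _ hp), eq_comm] at hpow

/-- The `k`-th coefficient `(a, d, e, p⁻ᵐ; p)_k / (p, ap/d, ap/e, apᵐ⁺¹; p)_k * (apᵐ⁺¹/(de))ᵏ` of a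
terminating well-poised series, with `h = ap/(de)`, so that `ap/d = e * h` and `ap/e = d * h`. -/
def wellPoisedCoeff (p a d e h : K) (m k : ℕ) : K :=
  qPochhammer a p k * qPochhammer d p k * qPochhammer e p k * qPochhammer (p ^ m)⁻¹ p k /
    (qPochhammer p p k * qPochhammer (e * h) p k * qPochhammer (d * h) p k *
      qPochhammer (a * p ^ (m + 1)) p k) * (h * p ^ m) ^ k

/-- The summand of the very-well-poised series obtained from the `j`-th term of the Saalschütz
expansion after interchanging the two summations. -/
def wellPoisedTerm (p a d e h : K) (m j k : ℕ) : K :=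
  (1 - a * p ^ (2 * k)) * wellPoisedCoeff p a d e h m k *
    (qPochhammer (p ^ k)⁻¹ p j * qPochhammer (a * p ^ k) p j)

/-- Gosper antidifference for the recurrence in `j` satisfied by `wellPoisedTerm`. -/
def wellPoisedAntidiff (p a d e h : K) (m j k : ℕ) : K :=
  -(p / (h * p ^ m) * p ^ j) * wellPoisedCoeff p a d e h m k *
    (qPochhammer (p ^ k)⁻¹ p (j + 1) * qPochhammer (a * p ^ k) p j) *
    ((1 - e * h * p ^ k / p) * (1 - d * h * p ^ k / p) * (1 - a * p ^ m * p ^ k))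

theorem qPochhammer_reverse {p y : K} (hp : p ≠ 0) (hy : y ≠ 0) (m : ℕ) :
    qPochhammer (p / (y * p ^ m)) p m * y ^ m * ∏ i ∈ range m, p ^ i =
      (-1) ^ m * qPochhammer y p m := by
  induction m with
  | zero => simp
  | succ m ih =>
    have hfirst : (1 - p / (y * p ^ (m + 1))) * y * p ^ m = -(1 - y * p ^ m) := by
      rw [pow_succ]; field_simp; ring
    have hshift : p / (y * p ^ (m + 1)) * p = p / (y * p ^ m) := by rw [pow_succ]; field_simp
    rw [qPochhammer_succ', hshift, qPochhammer_succ, prod_range_succ, pow_succ, pow_succ (-1 : K)]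
    linear_combination (-(1 - y * p ^ m)) * ih +
      qPochhammer (p / (y * p ^ m)) p m * y ^ m * (∏ i ∈ range m, p ^ i) * hfirst

theorem prod_range_pow_sq_mul (p : K) (m : ℕ) :
    (∏ i ∈ range m, p ^ i) ^ 2 * p ^ m = (p ^ m) ^ m := by
  induction m with
  | zero => simp
  | succ m ih =>
    rw [prod_range_succ, mul_pow, show (p ^ (m + 1)) ^ (m + 1) = (p ^ m) ^ m * p ^ m * p ^ (m + 1)
      by ring, ← ih]
    ring

theorem qPochhammer_inv_pow_mul {p h : K} (hp : p ≠ 0) (hh : h ≠ 0) (m : ℕ) :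
    qPochhammer (p ^ m)⁻¹ p m * qPochhammer (p / (h * p ^ m)) p m * (h * p ^ m) ^ m =
      qPochhammer p p m * qPochhammer h p m := by
  have hrev := qPochhammer_reverse hp hp m
  rw [show p / (p * p ^ m) = (p ^ m)⁻¹ by field_simp] at hrev
  have hsign : ((-1 : K) ^ m) * (-1) ^ m = 1 := by rw [← mul_pow]; simp
  rw [mul_pow, ← prod_range_pow_sq_mul]
  linear_combination
    (∏ i ∈ range m, p ^ i) * p ^ m * qPochhammer (p ^ m)⁻¹ p m * qPochhammer_reverse hp hh m +
      (-1) ^ m * qPochhammer h p m * hrev + qPochhammer p p m * qPochhammer h p m * hsign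

theorem wellPoisedCoeff_succ (p a d e h : K) (m k : ℕ) :
    wellPoisedCoeff p a d e h m (k + 1) =
      wellPoisedCoeff p a d e h m k *
        ((1 - a * p ^ k) * (1 - d * p ^ k) * (1 - e * p ^ k) * (1 - (p ^ m)⁻¹ * p ^ k) /
          ((1 - p * p ^ k) * (1 - e * h * p ^ k) * (1 - d * h * p ^ k) *
            (1 - a * p ^ (m + 1) * p ^ k)) * (h * p ^ m)) := by
  simp only [wellPoisedCoeff, qPochhammer_succ, pow_succ (h * p ^ m), div_eq_mul_inv, mul_inv]
  ring

section WellPoised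

variable {p a d e h : K} {m : ℕ} (hp : p ≠ 0) (hh : h ≠ 0)
  (h₁ : ∀ k, qPochhammer p p k ≠ 0) (h₂ : ∀ k, qPochhammer (e * h) p k ≠ 0)
  (h₃ : ∀ k, qPochhammer (d * h) p k ≠ 0) (h₄ : ∀ k, qPochhammer (a * p ^ (m + 1)) p k ≠ 0)
include hp hh h₁ h₂ h₃ h₄

theorem wellPoisedAntidiff_succ (j k : ℕ) :
    wellPoisedAntidiff p a d e h m j (k + 1) =
      p ^ j / p ^ k * ((1 - d * p ^ k) * (1 - e * p ^ k) * (1 - (p ^ m)⁻¹ * p ^ k) *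
        (1 - a * p ^ k * p ^ j)) * wellPoisedCoeff p a d e h m k *
        (qPochhammer (p ^ k)⁻¹ p j * qPochhammer (a * p ^ k) p j) := by
  have hshift : (1 - a * p ^ k) * qPochhammer (a * p ^ (k + 1)) p j =
      qPochhammer (a * p ^ k) p j * (1 - a * p ^ k * p ^ j) := by
    rw [← qPochhammer_mul_pow_succ, qPochhammer_succ]
  have hy₁ := one_sub_mul_pow_ne_zero h₁ k
  have hy₂ := one_sub_mul_pow_ne_zero h₂ k
  have hy₃ := one_sub_mul_pow_ne_zero h₃ k
  have hy₄ := one_sub_mul_pow_ne_zero h₄ k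
  have hfst : 1 - (p ^ (k + 1))⁻¹ = -(1 - p * p ^ k) / (p * p ^ k) := by
    rw [pow_succ']; field_simp; ring
  have hsnd (x : K) : 1 - x * p ^ (k + 1) / p = 1 - x * p ^ k := by rw [pow_succ]; field_simp
  have htrd : 1 - a * p ^ m * p ^ (k + 1) = 1 - a * p ^ (m + 1) * p ^ k := by ring
  rw [wellPoisedAntidiff, wellPoisedCoeff_succ, qPochhammer_inv_pow_succ hp, hfst, hsnd, hsnd, htrd]
  generalize 1 - p * p ^ k = y₁ at *
  generalize 1 - e * h * p ^ k = y₂ at *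
  generalize 1 - d * h * p ^ k = y₃ at *
  generalize 1 - a * p ^ (m + 1) * p ^ k = y₄ at *
  generalize wellPoisedCoeff p a d e h m k = C
  generalize qPochhammer (p ^ k)⁻¹ p j = x
  field_simp
  linear_combination C * x * (1 - d * p ^ k) * (1 - e * p ^ k) * (p ^ m - p ^ k) * hshift

theorem wellPoisedAntidiff_succ_sub (ha : a * p = d * e * h) (j k : ℕ) :
    wellPoisedAntidiff p a d e h m j (k + 1) - wellPoisedAntidiff p a d e h m j k =
      (1 - d * p ^ j) * (1 - e * p ^ j) * (1 - p ^ j * (p ^ m)⁻¹) *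
        wellPoisedTerm p a d e h m j k -
      (1 - p / (h * p ^ m) * p ^ j) * wellPoisedTerm p a d e h m (j + 1) k := by
  rw [wellPoisedAntidiff_succ hp hh h₁ h₂ h₃ h₄, wellPoisedAntidiff, wellPoisedTerm,
    wellPoisedTerm, qPochhammer_succ (p ^ k)⁻¹, qPochhammer_succ (a * p ^ k)]
  obtain rfl : a = d * e * h / p := eq_div_of_mul_eq hp ha
  generalize wellPoisedCoeff p _ d e h m k = C
  generalize qPochhammer (p ^ k)⁻¹ p j = x
  generalize qPochhammer _ p j = y
  field_simp
  ring

theorem sum_wellPoisedTerm_self (h₅ : ∀ k, qPochhammer (p / (h * p ^ m)) p k ≠ 0) :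
    ∑ k ∈ range (m + 1), wellPoisedTerm p a d e h m m k =
      (1 - a) * qPochhammer (a * p) p m * qPochhammer h p m * qPochhammer d p m *
        qPochhammer e p m * qPochhammer (p ^ m)⁻¹ p m /
        (qPochhammer (e * h) p m * qPochhammer (d * h) p m *
          qPochhammer (p / (h * p ^ m)) p m) := by
  rw [sum_eq_single_of_mem m (by simp)]
  swap
  · intro k hk hkm
    rw [wellPoisedTerm, qPochhammer_inv_pow_eq_zero hp (by have := mem_range.1 hk; omega),
      zero_mul, mul_zero]
  have hfirst : (1 - a) * qPochhammer (a * p) p m = qPochhammer a p m * (1 - a * p ^ m) := by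
    rw [← qPochhammer_succ', ← qPochhammer_succ]
  have hlast : (1 - a * p ^ m) * qPochhammer (a * p ^ (m + 1)) p m =
      qPochhammer (a * p ^ m) p m * (1 - a * p ^ (2 * m)) := by
    rw [← qPochhammer_mul_pow_succ, qPochhammer_succ]; ring
  have hrev := qPochhammer_inv_pow_mul hp hh m
  have hm₁ := h₁ m
  have hm₂ := h₂ m
  have hm₃ := h₃ m
  have hm₄ := h₄ m
  have hm₅ := h₅ m
  rw [hfirst, wellPoisedTerm, wellPoisedCoeff]
  generalize qPochhammer (p ^ m)⁻¹ p m = x at *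
  generalize qPochhammer (p / (h * p ^ m)) p m = y at *
  generalize (h * p ^ m) ^ m = z at *
  generalize qPochhammer (a * p ^ (m + 1)) p m = A at *
  generalize qPochhammer p p m = P at *
  generalize qPochhammer (e * h) p m = E at *
  generalize qPochhammer (d * h) p m = D at *
  field_simp
  linear_combination qPochhammer a p m * qPochhammer d p m * qPochhammer e p m * x *
    ((1 - a * p ^ (2 * m)) * qPochhammer (a * p ^ m) p m * hrev - P * qPochhammer h p m * hlast)

theorem sum_wellPoisedTerm (ha : a * p = d * e * h)
    (h₅ : ∀ k, qPochhammer (p / (h * p ^ m)) p k ≠ 0)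
    (hd : ∀ j < m, 1 - d * p ^ j ≠ 0) (he : ∀ j < m, 1 - e * p ^ j ≠ 0) {j : ℕ} (hj : j ≤ m) :
    ∑ k ∈ range (m + 1), wellPoisedTerm p a d e h m j k =
      (1 - a) * qPochhammer (a * p) p m * qPochhammer h p m * qPochhammer d p j *
        qPochhammer e p j * qPochhammer (p ^ m)⁻¹ p j /
        (qPochhammer (e * h) p m * qPochhammer (d * h) p m *
          qPochhammer (p / (h * p ^ m)) p j) := by
  induction hj using Nat.decreasingInduction with
  | self => exact sum_wellPoisedTerm_self hp hh h₁ h₂ h₃ h₄ h₅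
  | of_succ j hj ih =>
    have hzero : wellPoisedAntidiff p a d e h m j 0 = 0 := by
      rw [wellPoisedAntidiff, qPochhammer_inv_pow_eq_zero hp j.succ_pos, zero_mul, mul_zero,
        zero_mul]
    have hlast : wellPoisedAntidiff p a d e h m j (m + 1) = 0 := by
      rw [wellPoisedAntidiff_succ hp hh h₁ h₂ h₃ h₄, inv_mul_cancel₀ (pow_ne_zero _ hp)]
      ring
    have hrec := sum_range_sub (wellPoisedAntidiff p a d e h m j) (m + 1)
    simp only [wellPoisedAntidiff_succ_sub hp hh h₁ h₂ h₃ h₄ ha, sum_sub_distrib, ← mul_sum] at hrec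
    rw [ih, hzero, hlast, sub_zero, sub_eq_zero] at hrec
    have hd := hd j hj
    have he := he j hj
    have hm := one_sub_pow_mul_inv_pow_ne_zero hp h₁ hj
    apply mul_left_cancel₀ (mul_ne_zero (mul_ne_zero hd he) hm)
    rw [hrec]
    have hy := one_sub_mul_pow_ne_zero h₅ j
    have hm₂ := h₂ m
    have hm₃ := h₃ m
    simp only [qPochhammer_succ _ _ j, mul_comm (p ^ m)⁻¹]
    generalize 1 - p / (h * p ^ m) * p ^ j = y at *
    field_simp

end WellPoised

/-- The `k`-th term of a very-well-poised `₈φ₇` series, with the parameters in a Watson pair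
`b, c` recorded through `g = ap/(bc)` and those in the pair `d, e` through `h = ap/(de)`. -/
def watsonTerm (p a b c d e g h : K) (m k : ℕ) : K :=
  (1 - a * p ^ (2 * k)) * (qPochhammer a p k / qPochhammer p p k) *
    (qPochhammer b p k / qPochhammer (c * g) p k) * (qPochhammer c p k / qPochhammer (b * g) p k) *
    (qPochhammer d p k / qPochhammer (e * h) p k) * (qPochhammer e p k / qPochhammer (d * h) p k) *
    (qPochhammer (p ^ m)⁻¹ p k / qPochhammer (a * p ^ (m + 1)) p k) * (g * h * p ^ m) ^ k

theorem watson {p a b c d e g h : K} {m : ℕ} (hp : p ≠ 0) (hh : h ≠ 0)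
    (hg : a * p = b * c * g) (ha : a * p = d * e * h)
    (h₁ : ∀ k, qPochhammer p p k ≠ 0) (h₂ : ∀ k, qPochhammer (e * h) p k ≠ 0)
    (h₃ : ∀ k, qPochhammer (d * h) p k ≠ 0) (h₄ : ∀ k, qPochhammer (a * p ^ (m + 1)) p k ≠ 0)
    (h₅ : ∀ k, qPochhammer (p / (h * p ^ m)) p k ≠ 0) (h₆ : ∀ k, qPochhammer (c * g) p k ≠ 0)
    (h₇ : ∀ k, qPochhammer (b * g) p k ≠ 0) (hd : ∀ j < m, 1 - d * p ^ j ≠ 0)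
    (he : ∀ j < m, 1 - e * p ^ j ≠ 0) :
    ∑ k ∈ range (m + 1), watsonTerm p a b c d e g h m k =
      (1 - a) * qPochhammer (a * p) p m * qPochhammer h p m /
        (qPochhammer (e * h) p m * qPochhammer (d * h) p m) *
      ∑ j ∈ range (m + 1), qPochhammer g p j * qPochhammer d p j * qPochhammer e p j *
        qPochhammer (p ^ m)⁻¹ p j * p ^ j /
        (qPochhammer p p j * qPochhammer (c * g) p j * qPochhammer (b * g) p j *
          qPochhammer (p / (h * p ^ m)) p j) := by
  have hexpand : ∀ k ∈ range (m + 1), watsonTerm p a b c d e g h m k =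
      ∑ j ∈ range (m + 1), (qPochhammer g p j * p ^ j /
        (qPochhammer p p j * qPochhammer (c * g) p j * qPochhammer (b * g) p j)) *
        wellPoisedTerm p a d e h m j k := by
    intro k hk
    have hsaal := sum_saalschutzTerm hp hg h₁ h₆ h₇ (mem_range_succ_iff.1 hk)
    calc watsonTerm p a b c d e g h m k
        = (qPochhammer b p k * qPochhammer c p k * g ^ k /
            (qPochhammer (c * g) p k * qPochhammer (b * g) p k)) *
            ((1 - a * p ^ (2 * k)) * wellPoisedCoeff p a d e h m k) := by
          rw [watsonTerm, wellPoisedCoeff, mul_assoc g, mul_pow g]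
          simp only [div_eq_mul_inv, mul_inv]
          ring
      _ = _ := by
          rw [← hsaal, sum_mul]
          refine sum_congr rfl fun j _ => ?_
          rw [saalschutzTerm, wellPoisedTerm]
          ring
  rw [sum_congr rfl hexpand, sum_comm, mul_sum]
  refine sum_congr rfl fun j hj => ?_
  rw [← mul_sum, sum_wellPoisedTerm hp hh h₁ h₂ h₃ h₄ ha h₅ hd he (mem_range_succ_iff.1 hj)]
  simp only [div_eq_mul_inv, mul_inv]
  ring

end Watson

section Order

open WithZero

variable {K : Type*} [Field K] {v : Valuation K ℤᵐ⁰} {e e₁ e₂ : ℤ} {f f' g g' ε : K}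

/-- The fractional ideal of elements of order at least `e` at the place `v`. A valuation is written
multiplicatively in Mathlib, so order `e` means `v f = exp (-e)`. Congruences modulo the `e`-th
power of the place are written `f ≡ g [SMOD orderGE v e]`. -/
def orderGE (v : Valuation K ℤᵐ⁰) (e : ℤ) : Submodule v.integer K := v.leSubmodule (exp (-e))

theorem mem_orderGE : f ∈ orderGE v e ↔ v f ≤ exp (-e) := Iff.rfl

theorem mem_orderGE_zero : f ∈ orderGE v 0 ↔ f ∈ v.integer := Iff.rfl

theorem orderGE_anti (h : e₁ ≤ e₂) : orderGE v e₂ ≤ orderGE v e₁ :=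
  v.leSubmodule_monotone (exp_le_exp.2 (neg_le_neg h))

theorem mem_orderGE_of_eq (h : v f = exp (-e₁)) (he : e ≤ e₁) : f ∈ orderGE v e :=
  orderGE_anti he (mem_orderGE.2 h.le)

theorem mem_integer_of_eq_one (h : v f = 1) : f ∈ v.integer := h.le

theorem inv_mem_integer (h : v f = 1) : f⁻¹ ∈ v.integer :=
  mem_integer_of_eq_one (by rw [map_inv₀, h, inv_one])

theorem div_mem_integer (hf : f ∈ v.integer) (hg : v g = 1) : f / g ∈ v.integer := by
  simpa only [div_eq_mul_inv] using mul_mem hf (inv_mem_integer hg)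

theorem ne_zero_of_map_eq_one (h : v f = 1) : f ≠ 0 :=
  v.ne_zero_iff.1 (h.trans_ne one_ne_zero)

theorem mul_mem_orderGE (hf : f ∈ orderGE v e₁) (hg : g ∈ orderGE v e₂) (he : e ≤ e₁ + e₂) :
    f * g ∈ orderGE v e :=
  orderGE_anti he <| mem_orderGE.2 <| by
    rw [map_mul, neg_add, exp_add]
    exact mul_le_mul' hf hg

theorem integer_mul_mem_orderGE (hf : f ∈ v.integer) (hg : g ∈ orderGE v e) :
    f * g ∈ orderGE v e :=
  mul_mem_orderGE (mem_orderGE_zero.2 hf) hg (zero_add e).ge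

theorem mul_integer_mem_orderGE (hf : f ∈ orderGE v e) (hg : g ∈ v.integer) :
    f * g ∈ orderGE v e :=
  mul_mem_orderGE hf (mem_orderGE_zero.2 hg) (add_zero e).ge

theorem pow_mem_orderGE (hf : f ∈ orderGE v 1) (k : ℕ) : f ^ k ∈ orderGE v k := by
  rw [mem_orderGE, map_pow]
  exact (pow_le_pow_left' hf k).trans_eq (by rw [← exp_nsmul]; simp)

theorem mem_orderGE_of_smodEq (h : f ≡ g [SMOD orderGE v e]) (hg : g ∈ orderGE v e) :
    f ∈ orderGE v e :=
  (sub_add_cancel f g) ▸ add_mem (SModEq.sub_mem.1 h) hg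

theorem mem_integer_of_smodEq (he : 0 ≤ e) (h : f ≡ g [SMOD orderGE v e]) (hg : g ∈ v.integer) :
    f ∈ v.integer :=
  mem_orderGE_of_smodEq (h.mono (orderGE_anti he)) (mem_orderGE_zero.2 hg)

theorem smodEq_mul (hf : f ≡ f' [SMOD orderGE v e]) (hg : g ≡ g' [SMOD orderGE v e])
    (hfi : f ∈ v.integer) (hgi : g' ∈ v.integer) : f * g ≡ f' * g' [SMOD orderGE v e] := by
  rw [SModEq.sub_mem] at *
  have := add_mem (integer_mul_mem_orderGE hfi hg) (mul_integer_mem_orderGE hf hgi)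
  convert this using 1
  ring

theorem smodEq_mul_left (hf : f ∈ v.integer) (hg : g ≡ g' [SMOD orderGE v e]) :
    f * g ≡ f * g' [SMOD orderGE v e] := by
  rw [SModEq.sub_mem, ← mul_sub] at *
  exact integer_mul_mem_orderGE hf hg

theorem smodEq_mul_right (hg : g ∈ v.integer) (hf : f ≡ f' [SMOD orderGE v e]) :
    f * g ≡ f' * g [SMOD orderGE v e] := by
  simpa only [mul_comm _ g] using smodEq_mul_left hg hf

theorem smodEq_pow (h : f ≡ g [SMOD orderGE v e]) (hf : f ∈ v.integer) (hg : g ∈ v.integer)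
    (k : ℕ) : f ^ k ≡ g ^ k [SMOD orderGE v e] := by
  induction k with
  | zero => simp only [pow_zero]; exact SModEq.rfl
  | succ k ih => simpa only [pow_succ] using smodEq_mul ih h (pow_mem hf k) hg

theorem smodEq_div (hf : f ≡ f' [SMOD orderGE v e]) (hg : g ≡ g' [SMOD orderGE v e])
    (hfi : f' ∈ v.integer) (hg₁ : v g = 1) (hg₂ : v g' = 1) :
    f / g ≡ f' / g' [SMOD orderGE v e] := by
  rw [SModEq.sub_mem] at *
  have num_mem : (f - f') * g' - f' * (g - g') ∈ orderGE v e :=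
    sub_mem (mul_integer_mem_orderGE hf (mem_integer_of_eq_one hg₂))
      (integer_mul_mem_orderGE hfi hg)
  have := mul_integer_mem_orderGE num_mem
    (mul_mem (inv_mem_integer hg₁) (inv_mem_integer hg₂))
  convert this using 1
  have := ne_zero_of_map_eq_one hg₁
  have := ne_zero_of_map_eq_one hg₂
  field_simp
  ring

theorem one_add_mul_mul_smodEq (he : 0 ≤ e₁) (he₂ : 0 ≤ e₂) (he₁₂ : e₂ ≤ e₁ + e₁)
    (hε : ε ∈ orderGE v e₁) (hf : f ≡ 1 + ε * f' [SMOD orderGE v e₂])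
    (hg : g ≡ 1 + ε * g' [SMOD orderGE v e₂]) (hf' : f' ∈ v.integer) (hg' : g' ∈ v.integer) :
    f * g ≡ 1 + ε * (f' + g') [SMOD orderGE v e₂] := by
  have hεi : ε ∈ v.integer := mem_orderGE_zero.1 (orderGE_anti he hε)
  have hgi : 1 + ε * g' ∈ v.integer := add_mem (one_mem _) (mul_mem hεi hg')
  have hfi : f ∈ v.integer :=
    mem_integer_of_smodEq he₂ hf (add_mem (one_mem _) (mul_mem hεi hf'))
  refine (smodEq_mul hf hg hfi hgi).trans (SModEq.sub_mem.2 ?_)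
  have := mul_integer_mem_orderGE (mul_mem_orderGE hε hε he₁₂) (mul_mem hf' hg')
  convert this using 1
  ring

theorem prod_smodEq_one_add_mul_sum (he : 0 ≤ e₁) (he₂ : 0 ≤ e₂) (he₁₂ : e₂ ≤ e₁ + e₁)
    (hε : ε ∈ orderGE v e₁) {ι : Type*} (s : Finset ι) {u l : ι → K}
    (hu : ∀ i ∈ s, u i ≡ 1 + ε * l i [SMOD orderGE v e₂]) (hl : ∀ i ∈ s, l i ∈ v.integer) :
    ∏ i ∈ s, u i ≡ 1 + ε * ∑ i ∈ s, l i [SMOD orderGE v e₂] := by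
  classical
  induction s using Finset.induction_on with
  | empty => simp only [prod_empty, sum_empty, mul_zero, add_zero]; exact SModEq.rfl
  | insert i s hi ih =>
    rw [prod_insert hi, sum_insert hi]
    simp only [forall_mem_insert] at hu hl
    exact one_add_mul_mul_smodEq he he₂ he₁₂ hε hu.1 (ih hu.2 hl.2) hl.1 (sum_mem hl.2)

theorem inv_one_sub_mul_smodEq (he : e₂ ≤ e₁ + e₁) (hε : ε ∈ orderGE v e₁) (hf : f ∈ v.integer)
    (h : v (1 - ε * f) = 1) : (1 - ε * f)⁻¹ ≡ 1 + ε * f [SMOD orderGE v e₂] := by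
  rw [SModEq.sub_mem]
  have := mul_integer_mem_orderGE
    (mul_integer_mem_orderGE (mul_mem_orderGE hε hε he) (mul_mem hf hf)) (inv_mem_integer h)
  convert this using 1
  have := ne_zero_of_map_eq_one h
  field_simp
  ring

theorem mem_orderGE_of_two_mul_mem (h2 : v 2 = 1) (h : 2 * f ∈ orderGE v e) :
    f ∈ orderGE v e := by
  rwa [mem_orderGE, map_mul, h2, one_mul, ← mem_orderGE] at h

theorem sum_mem_orderGE_of_reflect_smodEq_neg (h2 : v 2 = 1) {a : ℕ} {w : ℕ → K}
    (hw : ∀ k ≤ a, w (a - k) ≡ -w k [SMOD orderGE v e]) :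
    ∑ k ∈ range (a + 1), w k ∈ orderGE v e := by
  refine mem_orderGE_of_two_mul_mem h2 ?_
  have reflect : ∑ k ∈ range (a + 1), w (a - k) = ∑ k ∈ range (a + 1), w k := by
    simpa only [Nat.add_sub_cancel] using sum_range_reflect w (a + 1)
  rw [two_mul]
  nth_rw 1 [← reflect]
  rw [← sum_add_distrib]
  refine sum_mem fun k hk => ?_
  simpa only [SModEq.sub_mem, sub_neg_eq_add] using hw k (mem_range_succ_iff.1 hk)

-- Telescoping gives `h (a - k) - h k ≡ h a - h 0`; the case `k = a` forces `h a ≡ h 0`.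
theorem reflect_smodEq_of_diff_antisymm (h2 : v 2 = 1) {a : ℕ} {h : ℕ → K}
    (hs : ∀ k b, k + 1 + b = a → (h (b + 1) - h b) + (h (k + 1) - h k) ∈ orderGE v e)
    {k : ℕ} (hk : k ≤ a) : h (a - k) ≡ h k [SMOD orderGE v e] := by
  have key : ∀ k ≤ a, (h (a - k) - h k) - (h a - h 0) ∈ orderGE v e := by
    intro k hk
    induction k with
    | zero => simp
    | succ k ih =>
      obtain ⟨b, rfl⟩ := Nat.exists_eq_add_of_le hk
      have := sub_mem (ih (by omega)) (hs k b rfl)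
      rw [show k + 1 + b - k = b + 1 by omega] at this
      rw [Nat.add_sub_cancel_left]
      convert this using 1
      ring
  have ends : h a - h 0 ∈ orderGE v e := by
    refine mem_orderGE_of_two_mul_mem h2 (neg_mem_iff.1 ?_)
    have := key a le_rfl
    rw [Nat.sub_self] at this
    convert this using 1
    ring
  rw [SModEq.sub_mem]
  simpa only [sub_add_cancel] using add_mem (key k hk) ends

end Order

section CyclotomicValuation

open Polynomial WithZero IsDedekindDomain

/-- The place of `ℚ(q)` defined by the irreducible polynomial `Φ_m`. -/
noncomputable def cyclotomicPlace (m : ℕ) [NeZero m] : HeightOneSpectrum ℚ[X] where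
  asIdeal := Ideal.span {cyclotomic m ℚ}
  isPrime := (Ideal.span_singleton_prime (cyclotomic_ne_zero m ℚ)).2
    (cyclotomic.irreducible_rat (NeZero.pos m)).prime
  ne_bot := by simpa using cyclotomic_ne_zero m ℚ

/-- The valuation of `ℚ(q)` at `Φ_m`, so that `Φ_m ^ e` divides `f` when
`f ∈ orderGE (cyclotomicValuation m) e`. -/
noncomputable def cyclotomicValuation (m : ℕ) [NeZero m] : Valuation (RatFunc ℚ) ℤᵐ⁰ :=
  (cyclotomicPlace m).valuation (RatFunc ℚ)

variable {m : ℕ} [NeZero m] {s t : ℤ}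

local notation "ν" => cyclotomicValuation m

theorem cyclotomicValuation_cyclotomic_self :
    ν (algebraMap ℚ[X] (RatFunc ℚ) (cyclotomic m ℚ)) = exp (-1) :=
  ((cyclotomicPlace m).valuation_of_algebraMap _).trans
    ((cyclotomicPlace m).intValuation_singleton (cyclotomic_ne_zero m ℚ) rfl)

theorem cyclotomicValuation_eq_one_of_isCoprime {p : ℚ[X]} (h : IsCoprime p (cyclotomic m ℚ)) :
    ν (algebraMap ℚ[X] (RatFunc ℚ) p) = 1 :=
  ((cyclotomicPlace m).valuation_eq_one_iff_notMem).2 fun hp =>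
    (cyclotomic.irreducible_rat (NeZero.pos m)).not_isUnit
      (h.isUnit_of_dvd' (Ideal.mem_span_singleton.1 hp) dvd_rfl)

theorem cyclotomic_pow_dvd_num {k : ℕ} {f : RatFunc ℚ} (hf : f ∈ orderGE ν k) :
    cyclotomic m ℚ ^ k ∣ f.num := by
  have order_num : algebraMap ℚ[X] (RatFunc ℚ) f.num ∈ orderGE ν k := by
    have denom_ne : algebraMap ℚ[X] (RatFunc ℚ) f.denom ≠ 0 := by simp [f.denom_ne_zero]
    rw [← div_mul_cancel₀ (algebraMap ℚ[X] (RatFunc ℚ) f.num) denom_ne, f.num_div_denom]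
    exact mul_integer_mem_orderGE hf ((cyclotomicPlace m).valuation_le_one _)
  have := ((cyclotomicPlace m).intValuation_le_pow_iff_mem f.num k).1
    (((cyclotomicPlace m).valuation_of_algebraMap _).ge.trans order_num)
  rwa [cyclotomicPlace, Ideal.span_singleton_pow, Ideal.mem_span_singleton] at this

theorem q_ne_zero : q ≠ 0 := RatFunc.X_ne_zero

theorem cyclotomicValuation_q : ν q = 1 := by
  rw [q, ← RatFunc.algebraMap_X]
  refine cyclotomicValuation_eq_one_of_isCoprime ?_
  refine IsCoprime.of_isCoprime_of_dvd_right ?_ (cyclotomic.dvd_X_pow_sub_one m ℚ)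
  exact ⟨X ^ (m - 1), -1, by rw [← pow_succ, Nat.sub_add_cancel NeZero.one_le]; ring⟩

theorem cyclotomicValuation_q_zpow (s : ℤ) : ν (q ^ s) = 1 := by
  rw [map_zpow₀, cyclotomicValuation_q, one_zpow]

theorem cyclotomicValuation_two : ν 2 = 1 := by
  have : IsCoprime (2 : ℚ[X]) (cyclotomic m ℚ) :=
    ⟨C (1 / 2), 0, by rw [← C_ofNat, ← C_mul]; simp⟩
  simpa only [map_ofNat] using cyclotomicValuation_eq_one_of_isCoprime this

theorem isCoprime_prod_cyclotomic {k : ℕ} (S : Finset ℕ) (hS : k ∉ S) :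
    IsCoprime (∏ i ∈ S, cyclotomic i ℚ) (cyclotomic k ℚ) :=
  IsCoprime.prod_left fun _ hi => cyclotomic.isCoprime_rat (ne_of_mem_of_not_mem hi hS)

theorem cyclotomicValuation_one_sub_q_pow {k : ℕ} (hk : k ≠ 0) :
    ν (1 - q ^ k) = exp (-if m ∣ k then 1 else 0) := by
  have factor : (1 - q ^ k : RatFunc ℚ) =
      -algebraMap ℚ[X] (RatFunc ℚ) (∏ i ∈ k.divisors, cyclotomic i ℚ) := by
    rw [prod_cyclotomic_eq_X_pow_sub_one (Nat.pos_of_ne_zero hk)]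
    simp [q]
  rw [factor, Valuation.map_neg]
  split_ifs with h
  · rw [← mul_prod_erase _ _ (Nat.mem_divisors.2 ⟨h, hk⟩), map_mul, map_mul,
      cyclotomicValuation_cyclotomic_self, cyclotomicValuation_eq_one_of_isCoprime
        (isCoprime_prod_cyclotomic _ (notMem_erase _ _)), mul_one]
  · rw [cyclotomicValuation_eq_one_of_isCoprime
      (isCoprime_prod_cyclotomic _ fun hm => h (Nat.dvd_of_mem_divisors hm)), neg_zero, exp_zero]

theorem one_sub_q_zpow_neg (s : ℤ) : 1 - q ^ (-s) = -(q ^ (-s) * (1 - q ^ s)) := by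
  rw [mul_sub, ← zpow_add₀ q_ne_zero]
  simp

theorem cyclotomicValuation_one_sub_q_zpow (hs : s ≠ 0) :
    ν (1 - q ^ s) = exp (-if (m : ℤ) ∣ s then 1 else 0) := by
  obtain ⟨k, rfl | rfl⟩ := s.eq_nat_or_neg
  · simpa only [zpow_natCast, Int.natCast_dvd_natCast] using
      cyclotomicValuation_one_sub_q_pow (m := m) (Int.natCast_ne_zero.1 hs)
  · rw [one_sub_q_zpow_neg, Valuation.map_neg, map_mul, cyclotomicValuation_q_zpow, one_mul,
      zpow_natCast,
      cyclotomicValuation_one_sub_q_pow (Int.natCast_ne_zero.1 (neg_ne_zero.1 hs))]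
    simp only [dvd_neg, Int.natCast_dvd_natCast]

theorem one_sub_q_zpow_ne_zero (hs : s ≠ 0) : 1 - q ^ s ≠ 0 := by
  rw [← (cyclotomicValuation 1).ne_zero_iff, cyclotomicValuation_one_sub_q_zpow hs]
  exact exp_ne_zero

theorem one_sub_q_ne_zero : 1 - q ≠ 0 := by
  simpa only [zpow_one] using one_sub_q_zpow_ne_zero one_ne_zero

theorem cyclotomicValuation_one_sub_q_zpow_of_not_dvd (hs : ¬ (m : ℤ) ∣ s) :
    ν (1 - q ^ s) = 1 := by
  rw [cyclotomicValuation_one_sub_q_zpow (by rintro rfl; exact hs (dvd_zero _)), if_neg hs,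
    neg_zero, exp_zero]

theorem one_sub_q_zpow_mem_orderGE (hs : (m : ℤ) ∣ s) : 1 - q ^ s ∈ orderGE ν 1 := by
  rcases eq_or_ne s 0 with rfl | h
  · simp
  · rw [mem_orderGE, cyclotomicValuation_one_sub_q_zpow h, if_pos hs]

theorem q_zpow_mem_integer (s : ℤ) : q ^ s ∈ (ν).integer :=
  mem_integer_of_eq_one (cyclotomicValuation_q_zpow s)

theorem one_sub_q_zpow_mem_integer (s : ℤ) : 1 - q ^ s ∈ (ν).integer :=
  sub_mem (one_mem _) (q_zpow_mem_integer s)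

theorem q_zpow_smodEq (h : (m : ℤ) ∣ s - t) : q ^ s ≡ q ^ t [SMOD orderGE ν 1] := by
  rw [SModEq.sub_mem, ← neg_mem_iff]
  have := integer_mul_mem_orderGE (q_zpow_mem_integer t) (one_sub_q_zpow_mem_orderGE h)
  rwa [mul_sub, ← zpow_add₀ q_ne_zero, mul_one, add_sub_cancel, ← neg_sub] at this

theorem one_sub_q_zpow_smodEq (h : (m : ℤ) ∣ s - t) :
    1 - q ^ s ≡ 1 - q ^ t [SMOD orderGE ν 1] :=
  SModEq.rfl.sub (q_zpow_smodEq h)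

theorem cyclotomicValuation_one_sub_q (hm : 1 < m) : ν (1 - q) = 1 := by
  rw [← zpow_one q]
  exact cyclotomicValuation_one_sub_q_zpow_of_not_dvd (by norm_cast; simpa using hm.ne')

theorem qint_mem_integer (hm : 1 < m) (s : ℤ) : qint s ∈ (ν).integer :=
  div_mem_integer (one_sub_q_zpow_mem_integer s) (cyclotomicValuation_one_sub_q hm)

theorem qint_mem_orderGE (hm : 1 < m) (hs : (m : ℤ) ∣ s) : qint s ∈ orderGE ν 1 := by
  rw [qint, div_eq_mul_inv]
  exact mul_integer_mem_orderGE (one_sub_q_zpow_mem_orderGE hs)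
    (inv_mem_integer (cyclotomicValuation_one_sub_q hm))

theorem geom_sum_mul_cyclotomic_pow {n : ℕ} (hn : 1 < n) (e : ℕ) :
    (∑ i ∈ range n, (X : ℚ[X]) ^ i) * cyclotomic n ℚ ^ e =
      ∏ i ∈ n.divisors.erase 1, cyclotomic i ℚ ^ (if i = n then e + 1 else 1) := by
  have n_mem : n ∈ n.divisors.erase 1 := by simp; omega
  rw [← prod_cyclotomic_eq_geom_sum (zero_lt_one.trans hn), ← mul_prod_erase _ _ n_mem,
    ← mul_prod_erase _ _ n_mem, if_pos rfl, pow_succ', mul_right_comm]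
  refine congrArg _ (prod_congr rfl fun i hi => ?_)
  rw [if_neg (ne_of_mem_erase hi), pow_one]

theorem qcong_of_dvd_num {f g : RatFunc ℚ} {P : ℚ[X]} (h : P ∣ (f - g).num) : qcong f g P := by
  obtain ⟨r, hr⟩ := h
  refine ⟨r, (f - g).denom, ?_, ?_⟩
  · exact (RatFunc.isCoprime_num_denom (f - g)).symm.of_isCoprime_of_dvd_right ⟨r, hr⟩
  · rw [← mul_div_assoc, ← map_mul, ← hr, RatFunc.num_div_denom]

theorem qcong_geom_sum_mul_cyclotomic_pow {n : ℕ} [NeZero n] (hn : 1 < n) (e : ℕ)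
    {f g : RatFunc ℚ}
    (h_self : f ≡ g [SMOD orderGE (cyclotomicValuation n) (e + 1)])
    (h_div : ∀ (m : ℕ) [NeZero m], m ∣ n → 1 < m → m < n →
      f ≡ g [SMOD orderGE (cyclotomicValuation m) 1]) :
    qcong f g ((∑ i ∈ range n, X ^ i) * cyclotomic n ℚ ^ e) := by
  refine qcong_of_dvd_num ?_
  rw [geom_sum_mul_cyclotomic_pow hn]
  refine prod_dvd_of_coprime (fun i _ j _ hij => (cyclotomic.isCoprime_rat hij).pow) fun i hi => ?_
  obtain ⟨i_ne_one, hi⟩ := mem_erase.1 hi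
  have i_dvd := Nat.dvd_of_mem_divisors hi
  have : NeZero i := ⟨(Nat.pos_of_mem_divisors hi).ne'⟩
  split_ifs with h
  · subst h
    exact cyclotomic_pow_dvd_num (by simpa using SModEq.sub_mem.1 h_self)
  · refine cyclotomic_pow_dvd_num (SModEq.sub_mem.1 (h_div i i_dvd ?_ ?_))
    · exact lt_of_le_of_ne NeZero.one_le (Ne.symm i_ne_one)
    · exact lt_of_le_of_ne (Nat.le_of_dvd (NeZero.pos n) i_dvd) h

end CyclotomicValuation

section ShiftedFactorial

open WithZero

/-- The `q`-shifted factorial `(q^α; q^d)_k` with integer exponents `α` and `d`. -/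
noncomputable def qzpoch (d α : ℤ) (k : ℕ) : RatFunc ℚ := ∏ i ∈ range k, (1 - q ^ (α + d * i))

variable {m k : ℕ} {d α : ℤ}

theorem qpoch_zpow (d : ℕ) (α : ℤ) (k : ℕ) : qpoch (q ^ α) (q ^ d) k = qzpoch d α k := by
  refine prod_congr rfl fun i _ => ?_
  rw [zpow_add₀ q_ne_zero, ← pow_mul, ← zpow_natCast q (d * i), Nat.cast_mul]

theorem qPochhammer_q_zpow (d α : ℤ) (k : ℕ) :
    qPochhammer (q ^ α) (q ^ d) k = qzpoch d α k := by
  refine prod_congr rfl fun i _ => ?_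
  rw [zpow_add₀ q_ne_zero, zpow_mul, zpow_natCast]

theorem qzpoch_zero (d α : ℤ) : qzpoch d α 0 = 1 := prod_range_zero _

theorem qzpoch_succ (d α : ℤ) (k : ℕ) :
    qzpoch d α (k + 1) = qzpoch d α k * (1 - q ^ (α + d * k)) := prod_range_succ _ _

theorem dvd_add_mul_iff_modEq (hmd : IsCoprime (m : ℤ) d) {i j : ℕ}
    (hj : (m : ℤ) ∣ α + d * j) : (m : ℤ) ∣ α + d * i ↔ i ≡ j [MOD m] := by
  rw [← Int.natCast_modEq_iff, Int.modEq_iff_dvd, ← dvd_sub_right hj,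
    show α + d * j - (α + d * i) = d * ((j : ℤ) - i) by ring]
  exact ⟨hmd.dvd_of_dvd_mul_left, fun h => h.mul_left d⟩

variable [NeZero m]

local notation "ν" => cyclotomicValuation m

theorem cyclotomicValuation_qzpoch_of_not_dvd (h : ∀ i < k, ¬ (m : ℤ) ∣ α + d * i) :
    ν (qzpoch d α k) = 1 := by
  rw [qzpoch, map_prod]
  exact prod_eq_one fun i hi =>
    cyclotomicValuation_one_sub_q_zpow_of_not_dvd (h i (mem_range.1 hi))

theorem cyclotomicValuation_qzpoch (hmd : IsCoprime (m : ℤ) d)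
    (hα : ∀ i : ℕ, α + d * i ≠ 0) {j : ℕ} (hjm : j < m) (hj : (m : ℤ) ∣ α + d * j) (k : ℕ) :
    ν (qzpoch d α k) = exp (-(((k / m : ℕ) : ℤ) + if j < k % m then 1 else 0)) := by
  rw [qzpoch, map_prod, prod_congr rfl fun i _ => cyclotomicValuation_one_sub_q_zpow (hα i)]
  have count := Nat.count_modEq_card k (NeZero.pos m) j
  rw [Nat.mod_eq_of_lt hjm, Nat.count_eq_card_filter_range] at count
  simp only [dvd_add_mul_iff_modEq hmd hj, exp_neg, prod_inv_distrib, apply_ite exp, exp_zero,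
    prod_ite, prod_const, one_pow, mul_one, count]
  rw [← exp_nsmul]
  push_cast
  simp

end ShiftedFactorial

section Reflection

open WithZero

/-- The `k`-th factor of `(q^r;q^d)_k / (q^d;q^d)_k`. -/
noncomputable def stepRatio (d r : ℤ) (k : ℕ) : RatFunc ℚ :=
  (1 - q ^ (r + d * k)) / (1 - q ^ (d + d * k))

/-- The quotient `(q^r;q^d)_k / (q^d;q^d)_k`. -/
noncomputable def qzpochRatio (d r : ℤ) (k : ℕ) : RatFunc ℚ := qzpoch d r k / qzpoch d d k

/-- The `k`-th term of the sum on the left hand side of the congruence. -/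
noncomputable def lhsTerm (d r : ℤ) (k : ℕ) : RatFunc ℚ :=
  qint (2 * d * k + r) * qzpochRatio d r k ^ 6 * q ^ ((2 * d - 3 * r) * k)

/-- The arithmetic of the indices: modulo `m` the exponents `r + d k` and `-(d + d (a - 1 - k))`
agree, so that `k ↦ a - k` is a symmetry of the terms modulo `Φ_m`. -/
structure ReflectionIndex (m a : ℕ) (d r : ℤ) : Prop where
  three_le : 3 ≤ d
  coprime_left : IsCoprime r d
  coprime_right : IsCoprime (m : ℤ) d
  one_lt : 1 < m
  lt : a < m
  dvd : (m : ℤ) ∣ d * a + r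

theorem qzpochRatio_zero (d r : ℤ) : qzpochRatio d r 0 = 1 := by
  rw [qzpochRatio, qzpoch_zero, qzpoch_zero, div_one]

theorem qzpochRatio_succ (d r : ℤ) (k : ℕ) :
    qzpochRatio d r (k + 1) = qzpochRatio d r k * stepRatio d r k := by
  rw [qzpochRatio, qzpoch_succ, qzpoch_succ, mul_div_mul_comm, qzpochRatio, stepRatio]

theorem ne_zero_of_dvd_sub_mul {d r c x : ℤ} (hr : IsCoprime r d) (hc : c ≠ 0) (hcd : |c| < d)
    (h : d ∣ x - c * r) : x ≠ 0 := by
  rintro rfl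
  rw [zero_sub, dvd_neg] at h
  exact hc (Int.eq_zero_of_abs_lt_dvd (hr.symm.dvd_of_dvd_mul_right h) hcd)

namespace ReflectionIndex

variable {m a : ℕ} {d r α : ℤ} {i k : ℕ}

theorem add_mul_ne_zero (H : ReflectionIndex m a d r) (i : ℕ) : r + d * i ≠ 0 := by
  have := H.three_le
  exact ne_zero_of_dvd_sub_mul H.coprime_left one_ne_zero (by simp; omega) ⟨i, by ring⟩

theorem two_mul_add_mul_ne_zero (H : ReflectionIndex m a d r) (i : ℕ) : 2 * r + d * i ≠ 0 := by
  have := H.three_le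
  exact ne_zero_of_dvd_sub_mul H.coprime_left two_ne_zero (by simp; omega) ⟨i, by ring⟩

theorem sub_add_mul_ne_zero (H : ReflectionIndex m a d r) (i : ℕ) : d - r + d * i ≠ 0 := by
  have := H.three_le
  exact ne_zero_of_dvd_sub_mul H.coprime_left (c := -1) (by norm_num) (by simp; omega)
    ⟨i + 1, by ring⟩

theorem self_add_mul_ne_zero (H : ReflectionIndex m a d r) (i : ℕ) : d + d * i ≠ 0 := by
  have := H.three_le
  positivity

theorem not_dvd_mul (H : ReflectionIndex m a d r) {x : ℤ} (hx : x ≠ 0) (hxm : |x| < m) :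
    ¬ (m : ℤ) ∣ d * x := fun h =>
  hx (Int.eq_zero_of_abs_lt_dvd (H.coprime_right.dvd_of_dvd_mul_left h) hxm)

theorem not_dvd_of_dvd_sub (H : ReflectionIndex m a d r) (hα : (m : ℤ) ∣ α - r) (hi : i < m)
    (hia : i ≠ a) : ¬ (m : ℤ) ∣ α + d * i := by
  intro h
  have := H.lt
  refine H.not_dvd_mul (x := i - a) (by omega) (abs_lt.2 (by omega)) ?_
  have := dvd_sub (dvd_sub h H.dvd) hα
  rwa [show α + d * i - (d * a + r) - (α - r) = d * (i - a) by ring] at this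

theorem not_dvd_of_dvd_sub_self (H : ReflectionIndex m a d r) (hα : (m : ℤ) ∣ α - d)
    (hi : i + 1 < m) : ¬ (m : ℤ) ∣ α + d * i := by
  intro h
  refine H.not_dvd_mul (x := i + 1) (by omega) (abs_lt.2 (by omega)) ?_
  have := dvd_sub h hα
  rwa [show α + d * i - (α - d) = d * (i + 1) by ring] at this

theorem not_dvd_add_mul (H : ReflectionIndex m a d r) (hi : i < a) : ¬ (m : ℤ) ∣ r + d * i :=
  H.not_dvd_of_dvd_sub (by simp) (hi.trans H.lt) hi.ne

theorem not_dvd_self_add_mul (H : ReflectionIndex m a d r) (hi : i + 1 < m) :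
    ¬ (m : ℤ) ∣ d + d * i :=
  H.not_dvd_of_dvd_sub_self (by simp) hi

variable [NeZero m]

local notation "ν" => cyclotomicValuation m

theorem valuation_qzpoch (H : ReflectionIndex m a d r) (hα : (m : ℤ) ∣ α - r) (hk : k ≤ a) :
    ν (qzpoch d α k) = 1 :=
  cyclotomicValuation_qzpoch_of_not_dvd fun _ hi =>
    H.not_dvd_of_dvd_sub hα (by have := H.lt; omega) (by omega)

theorem valuation_qzpoch_self (H : ReflectionIndex m a d r) (hα : (m : ℤ) ∣ α - d)
    (hk : k < m) : ν (qzpoch d α k) = 1 :=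
  cyclotomicValuation_qzpoch_of_not_dvd fun _ hi => H.not_dvd_of_dvd_sub_self hα (by omega)

theorem valuation_qzpoch_r (H : ReflectionIndex m a d r) (k : ℕ) :
    ν (qzpoch d r k) = exp (-(((k / m : ℕ) : ℤ) + if a < k % m then 1 else 0)) :=
  cyclotomicValuation_qzpoch H.coprime_right H.add_mul_ne_zero H.lt
    (H.dvd.trans (dvd_of_eq (by ring))) k

theorem valuation_qzpoch_d (H : ReflectionIndex m a d r) (k : ℕ) :
    ν (qzpoch d d k) = exp (-((k / m : ℕ) : ℤ)) := by
  have hm := H.one_lt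
  have hk := Nat.mod_lt k (NeZero.pos m)
  rw [cyclotomicValuation_qzpoch H.coprime_right H.self_add_mul_ne_zero (Nat.sub_one_lt_of_lt hm)
    ⟨d, by push_cast [hm.le]; ring⟩, if_neg (by omega), add_zero]

theorem valuation_qzpochRatio (H : ReflectionIndex m a d r) (k : ℕ) :
    ν (qzpochRatio d r k) = exp (-if a < k % m then 1 else 0) := by
  rw [qzpochRatio, map_div₀, H.valuation_qzpoch_r, H.valuation_qzpoch_d, ← exp_sub]
  congr 1
  ring

theorem qzpochRatio_mem_integer (H : ReflectionIndex m a d r) (k : ℕ) :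
    qzpochRatio d r k ∈ (ν).integer :=
  mem_orderGE_zero.1 (mem_orderGE_of_eq (H.valuation_qzpochRatio k) (by split_ifs <;> simp))

theorem valuation_one_sub_add_mul (H : ReflectionIndex m a d r) (hi : i < a) :
    ν (1 - q ^ (r + d * i)) = 1 :=
  cyclotomicValuation_one_sub_q_zpow_of_not_dvd (H.not_dvd_add_mul hi)

theorem valuation_one_sub_self_add_mul (H : ReflectionIndex m a d r) (hi : i + 1 < m) :
    ν (1 - q ^ (d + d * i)) = 1 :=
  cyclotomicValuation_one_sub_q_zpow_of_not_dvd (H.not_dvd_self_add_mul hi)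

theorem valuation_stepRatio (H : ReflectionIndex m a d r) (hk : k < a) :
    ν (stepRatio d r k) = 1 := by
  rw [stepRatio, map_div₀, H.valuation_one_sub_add_mul hk,
    H.valuation_one_sub_self_add_mul (by have := H.lt; omega), div_one]

theorem inv_stepRatio_smodEq (H : ReflectionIndex m a d r) {b : ℕ} (hkb : k + 1 + b = a) :
    (stepRatio d r b)⁻¹ ≡ q ^ (d - r) * stepRatio d r k [SMOD orderGE ν 1] := by
  have ham := H.lt
  have hdvd := H.dvd
  rw [← hkb] at hdvd
  push_cast at hdvd
  have unit_neg : ν (1 - q ^ (-(d + d * k))) = 1 :=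
    cyclotomicValuation_one_sub_q_zpow_of_not_dvd
      (by rw [dvd_neg]; exact H.not_dvd_self_add_mul (by omega))
  have reflected : (stepRatio d r b)⁻¹ ≡
      (1 - q ^ (-(r + d * k))) / (1 - q ^ (-(d + d * k))) [SMOD orderGE ν 1] := by
    rw [stepRatio, inv_div]
    refine smodEq_div (one_sub_q_zpow_smodEq ?_) (one_sub_q_zpow_smodEq ?_)
      (one_sub_q_zpow_mem_integer _) (H.valuation_one_sub_add_mul (by omega)) unit_neg
    all_goals exact hdvd.trans (dvd_of_eq (by ring))
  convert reflected using 1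
  have shift : q ^ (d - r) = q ^ (-(r + d * k)) / q ^ (-(d + d * k)) := by
    rw [← zpow_sub₀ q_ne_zero]
    congr 1
    ring
  rw [one_sub_q_zpow_neg, one_sub_q_zpow_neg, neg_div_neg_eq, mul_div_mul_comm, shift, stepRatio]

theorem qzpochRatio_reflect_smodEq (H : ReflectionIndex m a d r) (hk : k ≤ a) :
    qzpochRatio d r (a - k) ≡ q ^ ((d - r) * k) * qzpochRatio d r k * qzpochRatio d r a
      [SMOD orderGE ν 1] := by
  induction k with
  | zero => simpa only [qzpochRatio_zero, CharP.cast_eq_zero, mul_zero, zpow_zero, mul_one,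
      one_mul, Nat.sub_zero] using SModEq.rfl
  | succ k ih =>
    obtain ⟨b, hb⟩ := Nat.exists_eq_add_of_le hk
    have unit_step := H.valuation_stepRatio (k := b) (by omega)
    have ih := ih (by omega)
    rw [show a - k = b + 1 by omega, qzpochRatio_succ] at ih
    rw [show a - (k + 1) = b by omega, qzpochRatio_succ]
    have := smodEq_mul ih (H.inv_stepRatio_smodEq hb.symm)
      (mul_mem (H.qzpochRatio_mem_integer _) (mem_integer_of_eq_one unit_step))
      (mul_mem (q_zpow_mem_integer _)
        (mem_integer_of_eq_one (H.valuation_stepRatio (by omega))))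
    rw [mul_inv_cancel_right₀ (ne_zero_of_map_eq_one unit_step)] at this
    convert this using 1
    rw [Nat.cast_succ, mul_add, mul_one, zpow_add₀ q_ne_zero]
    ring

theorem qzpochRatio_pow_six_reflect_smodEq (H : ReflectionIndex m a d r) (hk : k ≤ a) :
    qzpochRatio d r (a - k) ^ 6 ≡
      q ^ (6 * ((d - r) * k) - 3 * ((d - r) * a)) * qzpochRatio d r k ^ 6 [SMOD orderGE ν 1] := by
  have int_k := H.qzpochRatio_mem_integer k
  have int_a := H.qzpochRatio_mem_integer a
  have pow_six := smodEq_pow (H.qzpochRatio_reflect_smodEq hk)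
    (H.qzpochRatio_mem_integer _)
    (mul_mem (mul_mem (q_zpow_mem_integer _) int_k) int_a) 6
  have pow_three := smodEq_pow (H.qzpochRatio_reflect_smodEq le_rfl)
    (H.qzpochRatio_mem_integer _)
    (mul_mem (mul_mem (q_zpow_mem_integer _) int_a) int_a) 3
  rw [Nat.sub_self, qzpochRatio_zero, one_pow] at pow_three
  refine pow_six.trans ?_
  have := smodEq_mul_left (mul_mem (q_zpow_mem_integer (6 * ((d - r) * k) - 3 * ((d - r) * a)))
    (pow_mem int_k 6)) pow_three.symm
  rw [mul_one] at this
  convert this using 1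
  have expand : q ^ (6 * ((d - r) * k) - 3 * ((d - r) * a)) =
      (q ^ ((d - r) * k)) ^ 6 / (q ^ ((d - r) * a)) ^ 3 := by
    rw [zpow_sub₀ q_ne_zero, mul_comm 6, mul_comm 3, zpow_mul, zpow_mul _ _ 3]
    norm_cast
  have := zpow_ne_zero ((d - r) * a) q_ne_zero
  rw [expand]
  field_simp

theorem lhsTerm_reflect_smodEq (H : ReflectionIndex m a d r) (hk : k ≤ a) :
    lhsTerm d r (a - k) ≡ -lhsTerm d r k [SMOD orderGE ν 1] := by
  set E := 6 * ((d - r) * k) - 3 * ((d - r) * a) with hE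
  have int_k := H.qzpochRatio_mem_integer k
  have int_inv := inv_mem_integer (cyclotomicValuation_one_sub_q H.one_lt)
  have exponents : q ^ ((2 * d - 3 * r) * (a - k) + E) -
        q ^ ((2 * d - 3 * r) * (a - k) + E + (2 * d * (a - k) + r)) ≡
      q ^ ((2 * d - 3 * r) * k + (2 * d * k + r)) - q ^ ((2 * d - 3 * r) * k)
        [SMOD orderGE ν 1] := by
    exact (q_zpow_smodEq ((dvd_neg.2 H.dvd).trans (dvd_of_eq (by rw [hE]; ring)))).sub
      (q_zpow_smodEq (H.dvd.trans (dvd_of_eq (by rw [hE]; ring))))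
  have reduced := smodEq_mul_left
    (mul_mem (qint_mem_integer H.one_lt (2 * d * (a - k) + r))
      (q_zpow_mem_integer ((2 * d - 3 * r) * (a - k)))) (H.qzpochRatio_pow_six_reflect_smodEq hk)
  have swapped := smodEq_mul_right (mul_mem int_inv (pow_mem int_k 6)) exponents
  have lhs_eq : lhsTerm d r (a - k) = qint (2 * d * (a - k) + r) *
      q ^ ((2 * d - 3 * r) * (a - k)) * qzpochRatio d r (a - k) ^ 6 := by
    rw [lhsTerm, Nat.cast_sub hk, mul_right_comm]
  rw [lhs_eq]
  refine reduced.trans ?_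
  convert swapped using 1
  · rw [zpow_add₀ q_ne_zero _ (2 * d * (a - k) + r), zpow_add₀ q_ne_zero, qint, hE]
    ring
  · rw [lhsTerm, qint, zpow_add₀ q_ne_zero _ (2 * d * k + r)]
    ring

theorem sum_lhsTerm_mem_orderGE (H : ReflectionIndex m a d r) :
    ∑ k ∈ range (a + 1), lhsTerm d r k ∈ orderGE ν 1 :=
  sum_mem_orderGE_of_reflect_smodEq_neg cyclotomicValuation_two fun _ =>
    H.lhsTerm_reflect_smodEq

end ReflectionIndex

end Reflection

section Blocks

open WithZero

/-- The summand of the inner sum on the right hand side of the congruence, without its correction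
factor. -/
noncomputable def rhsTerm (d r : ℤ) (k : ℕ) : RatFunc ℚ :=
  qzpoch d r k ^ 3 * qzpoch d (d - r) k * q ^ (d * k) / (qzpoch d d k ^ 3 * qzpoch d (2 * r) k)

/-- The sum over `j` in the correction factor on the right hand side, with `j` shifted to start
from `0`. -/
noncomputable def correctionSum (d r : ℤ) (k : ℕ) : RatFunc ℚ :=
  ∑ j ∈ range k, (q ^ (d + d * j) / qint (d + d * j) ^ 2 + q ^ (r + d * j) / qint (r + d * j) ^ 2)

/-- The right hand side of the congruence, with `a = (dn-n-r)/d` and `N = dn-n`. -/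
noncomputable def rhsSum (d r : ℤ) (a : ℕ) (N : ℤ) : RatFunc ℚ :=
  qint N * q ^ (-r * a) * (qzpoch d (2 * r) a / qzpoch d d a) *
    ∑ k ∈ range (a + 1), rhsTerm d r k * (1 - qint N ^ 2 * (2 - q ^ N) * correctionSum d r k)

namespace ReflectionIndex

variable {m a : ℕ} [NeZero m] {d r : ℤ} {k : ℕ}

local notation "ν" => cyclotomicValuation m

theorem valuation_qzpoch_sub (H : ReflectionIndex m a d r) (k : ℕ) :
    ν (qzpoch d (d - r) k) =
      exp (-(((k / m : ℕ) : ℤ) + if m - 1 - a < k % m then 1 else 0)) := by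
  have ham := H.lt
  obtain ⟨c, hc⟩ := H.dvd
  have index_cast : ((m - 1 - a : ℕ) : ℤ) = m - 1 - a := by omega
  exact cyclotomicValuation_qzpoch H.coprime_right H.sub_add_mul_ne_zero (by omega)
    ⟨d - c, by rw [index_cast]; linear_combination -hc⟩ k

theorem valuation_qzpoch_two_mul (H : ReflectionIndex m a d r) (k : ℕ) :
    ν (qzpoch d (2 * r) k) =
      exp (-(((k / m : ℕ) : ℤ) + if 2 * a % m < k % m then 1 else 0)) := by
  obtain ⟨c, hc⟩ := H.dvd
  have div_add_mod : ((2 * a % m : ℕ) : ℤ) + m * (2 * a / m : ℕ) = 2 * a :=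
    mod_cast Nat.mod_add_div (2 * a) m
  exact cyclotomicValuation_qzpoch H.coprime_right H.two_mul_add_mul_ne_zero
    (Nat.mod_lt _ (NeZero.pos m))
    ⟨2 * c - d * (2 * a / m : ℕ), by linear_combination 2 * hc + d * div_add_mod⟩ k

theorem lhsTerm_mem_orderGE_six (H : ReflectionIndex m a d r) (hak : a < k) (hkm : k < m) :
    lhsTerm d r k ∈ orderGE ν 6 := by
  have ratio_mem : qzpochRatio d r k ∈ orderGE ν 1 :=
    mem_orderGE_of_eq (H.valuation_qzpochRatio k)
      (by rw [Nat.mod_eq_of_lt hkm, if_pos hak])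
  exact mul_integer_mem_orderGE
    (integer_mul_mem_orderGE (qint_mem_integer H.one_lt _) (pow_mem_orderGE ratio_mem 6))
    (q_zpow_mem_integer _)

theorem qzpochRatio_add_smodEq (H : ReflectionIndex m a d r) (u : ℕ) {v : ℕ} (hv : v < m) :
    qzpochRatio d r (u * m + v) ≡ qzpochRatio d r (u * m) * qzpochRatio d r v
      [SMOD orderGE ν 1] := by
  induction v with
  | zero => rw [add_zero, qzpochRatio_zero, mul_one]
  | succ v ih =>
    rw [← add_assoc, qzpochRatio_succ, qzpochRatio_succ, ← mul_assoc]
    have unit_v := H.valuation_one_sub_self_add_mul hv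
    have unit_block : ν (1 - q ^ (d + d * (u * m + v : ℕ))) = 1 :=
      cyclotomicValuation_one_sub_q_zpow_of_not_dvd fun h =>
        H.not_dvd_of_dvd_sub_self (α := d + d * u * m) ⟨d * u, by ring⟩ hv
          (h.trans (dvd_of_eq (by push_cast; ring)))
    have step : stepRatio d r (u * m + v) ≡ stepRatio d r v [SMOD orderGE ν 1] :=
      smodEq_div (one_sub_q_zpow_smodEq ⟨d * u, by push_cast; ring⟩)
        (one_sub_q_zpow_smodEq ⟨d * u, by push_cast; ring⟩)
        (one_sub_q_zpow_mem_integer _) unit_block unit_v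
    exact smodEq_mul (ih (by omega)) step (H.qzpochRatio_mem_integer _)
      (div_mem_integer (one_sub_q_zpow_mem_integer _) unit_v)

theorem lhsTerm_add_smodEq (H : ReflectionIndex m a d r) (u : ℕ) {v : ℕ} (hv : v < m) :
    lhsTerm d r (u * m + v) ≡ qzpochRatio d r (u * m) ^ 6 * lhsTerm d r v
      [SMOD orderGE ν 1] := by
  have int_ratio := H.qzpochRatio_mem_integer
  have int_prod := mul_mem (int_ratio (u * m)) (int_ratio v)
  have unit_q := cyclotomicValuation_one_sub_q H.one_lt
  have bracket : qint (2 * d * (u * m + v : ℕ) + r) ≡ qint (2 * d * v + r) [SMOD orderGE ν 1] :=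
    smodEq_div (one_sub_q_zpow_smodEq ⟨2 * d * u, by push_cast; ring⟩) SModEq.rfl
      (one_sub_q_zpow_mem_integer _) unit_q unit_q
  have power : q ^ ((2 * d - 3 * r) * (u * m + v : ℕ)) ≡ q ^ ((2 * d - 3 * r) * v)
      [SMOD orderGE ν 1] := q_zpow_smodEq ⟨(2 * d - 3 * r) * u, by push_cast; ring⟩
  have ratio := smodEq_pow (H.qzpochRatio_add_smodEq u hv) (int_ratio _) int_prod 6
  have product := smodEq_mul
    (smodEq_mul bracket ratio (qint_mem_integer H.one_lt _) (pow_mem int_prod 6)) power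
    (mul_mem (qint_mem_integer H.one_lt _) (pow_mem (int_ratio _) 6)) (q_zpow_mem_integer _)
  convert product using 1 <;>
    rw [lhsTerm]
  ring

theorem sum_lhsTerm_block_mem_orderGE (H : ReflectionIndex m a d r) (u : ℕ) {b : ℕ} (hb : b ≤ m)
    (h : ∑ v ∈ range b, lhsTerm d r v ∈ orderGE ν 1) :
    ∑ v ∈ range b, lhsTerm d r (u * m + v) ∈ orderGE ν 1 := by
  refine mem_orderGE_of_smodEq (SModEq.sum fun v hv =>
    H.lhsTerm_add_smodEq u ((mem_range.1 hv).trans_le hb)) ?_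
  rw [← mul_sum]
  exact integer_mul_mem_orderGE (pow_mem (H.qzpochRatio_mem_integer _) 6) h

theorem sum_lhsTerm_range_self_mem_orderGE (H : ReflectionIndex m a d r) :
    ∑ k ∈ range m, lhsTerm d r k ∈ orderGE ν 1 := by
  rw [← sum_range_add_sum_Ico _ (Nat.succ_le_of_lt H.lt)]
  refine add_mem H.sum_lhsTerm_mem_orderGE (sum_mem fun k hk => ?_)
  obtain ⟨hak, hkm⟩ := mem_Ico.1 hk
  exact orderGE_anti (by norm_num) (H.lhsTerm_mem_orderGE_six hak hkm)

theorem sum_lhsTerm_range_mul_mem_orderGE (H : ReflectionIndex m a d r) (u : ℕ) :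
    ∑ k ∈ range (u * m), lhsTerm d r k ∈ orderGE ν 1 := by
  induction u with
  | zero => simp
  | succ u ih =>
    rw [add_mul, one_mul, sum_range_add]
    exact add_mem ih
      (H.sum_lhsTerm_block_mem_orderGE u le_rfl H.sum_lhsTerm_range_self_mem_orderGE)

theorem sum_lhsTerm_range_mul_add_mem_orderGE (H : ReflectionIndex m a d r) (u : ℕ) :
    ∑ k ∈ range (u * m + a + 1), lhsTerm d r k ∈ orderGE ν 1 := by
  rw [add_assoc, sum_range_add]
  exact add_mem (H.sum_lhsTerm_range_mul_mem_orderGE u)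
    (H.sum_lhsTerm_block_mem_orderGE u H.lt H.sum_lhsTerm_mem_orderGE)

theorem valuation_rhsTerm (H : ReflectionIndex m a d r) (k : ℕ) :
    ν (rhsTerm d r k) = exp (-(3 * (if a < k % m then 1 else 0) +
      (if m - 1 - a < k % m then 1 else 0) - if 2 * a % m < k % m then 1 else 0)) := by
  simp only [rhsTerm, map_div₀, map_mul, map_pow, H.valuation_qzpoch_r, H.valuation_qzpoch_d,
    H.valuation_qzpoch_sub, H.valuation_qzpoch_two_mul, cyclotomicValuation_q_zpow, mul_one]
  rw [← exp_nsmul, ← exp_nsmul, ← exp_add, ← exp_add, ← exp_sub]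
  congr 1
  ring

theorem valuation_qzpoch_two_mul_div (H : ReflectionIndex m a d r) (k : ℕ) :
    ν (qzpoch d (2 * r) k / qzpoch d d k) = exp (-if 2 * a % m < k % m then 1 else 0) := by
  rw [map_div₀, H.valuation_qzpoch_two_mul, H.valuation_qzpoch_d, ← exp_sub]
  congr 1
  ring

theorem prefactor_mul_rhsTerm_mem_integer (H : ReflectionIndex m a d r) (u k : ℕ) :
    qzpoch d (2 * r) (u * m + a) / qzpoch d d (u * m + a) * rhsTerm d r k ∈ (ν).integer := by
  have ham := H.lt
  refine mem_orderGE_zero.1 (mem_orderGE_of_eq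
    (e₁ := (if 2 * a % m < a then 1 else 0) + (3 * (if a < k % m then 1 else 0) +
      (if m - 1 - a < k % m then 1 else 0) - if 2 * a % m < k % m then 1 else 0)) ?_ ?_)
  · rw [map_mul, H.valuation_qzpoch_two_mul_div, H.valuation_rhsTerm, neg_add, exp_add,
      Nat.mul_add_mod_of_lt ham]
  · rcases lt_or_ge (2 * a) m with h | h
    · rw [Nat.mod_eq_of_lt h]
      split_ifs <;> omega
    · rw [Nat.mod_eq_sub_mod h, Nat.mod_eq_of_lt (by omega)]
      split_ifs <;> omega

end ReflectionIndex

section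

variable {m : ℕ} [NeZero m] {N s : ℤ}

local notation "ν" => cyclotomicValuation m

theorem qint_sq_mul_zpow_div_mem_integer (hN : (m : ℤ) ∣ N) (hs : s ≠ 0) :
    qint N ^ 2 * (q ^ s / qint s ^ 2) ∈ (ν).integer := by
  have quotient_mem : (1 - q ^ N) / (1 - q ^ s) ∈ (ν).integer := by
    have inv_mem : (1 - q ^ s)⁻¹ ∈ orderGE ν (-1) :=
      mem_orderGE_of_eq (e₁ := -if (m : ℤ) ∣ s then 1 else 0)
        (by rw [map_inv₀, cyclotomicValuation_one_sub_q_zpow hs, ← exp_neg])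
        (by split_ifs <;> norm_num)
    rw [div_eq_mul_inv]
    exact mem_orderGE_zero.1 (mul_mem_orderGE (one_sub_q_zpow_mem_orderGE hN) inv_mem le_rfl)
  have := mul_mem (pow_mem quotient_mem 2) (q_zpow_mem_integer s)
  convert this using 1
  have := one_sub_q_ne_zero
  have := one_sub_q_zpow_ne_zero hs
  rw [qint, qint]
  field_simp

namespace ReflectionIndex

variable {a : ℕ} {d r : ℤ}

theorem correction_mem_integer (H : ReflectionIndex m a d r) (hN : (m : ℤ) ∣ N) (k : ℕ) :
    1 - qint N ^ 2 * (2 - q ^ N) * correctionSum d r k ∈ (ν).integer := by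
  have two_mem : (2 : RatFunc ℚ) ∈ (ν).integer := mem_integer_of_eq_one cyclotomicValuation_two
  rw [mul_right_comm, correctionSum, mul_sum]
  refine sub_mem (one_mem _) (mul_mem (sum_mem fun j _ => ?_)
    (sub_mem two_mem (q_zpow_mem_integer N)))
  rw [mul_add]
  exact add_mem (qint_sq_mul_zpow_div_mem_integer hN (H.self_add_mul_ne_zero j))
    (qint_sq_mul_zpow_div_mem_integer hN (H.add_mul_ne_zero j))

theorem rhsSum_mem_orderGE (H : ReflectionIndex m a d r) (u : ℕ) (hN : (m : ℤ) ∣ N) :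
    rhsSum d r (u * m + a) N ∈ orderGE ν 1 := by
  rw [rhsSum, mul_assoc, mul_sum]
  refine mul_integer_mem_orderGE
    (mul_integer_mem_orderGE (qint_mem_orderGE H.one_lt hN) (q_zpow_mem_integer _))
    (sum_mem fun k _ => ?_)
  rw [← mul_assoc]
  exact mul_mem (H.prefactor_mul_rhsTerm_mem_integer u k) (H.correction_mem_integer hN k)

end ReflectionIndex

end

end Blocks

section WatsonSpecialization

/-- The quotient `(q^(r+s);q^d)_k / (q^(d-s);q^d)_k`, a shift by `s` of `qzpochRatio`. -/
noncomputable def shiftedRatio (d r s : ℤ) (k : ℕ) : RatFunc ℚ :=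
  qzpoch d (r + s) k / qzpoch d (d - s) k

/-- The deformation `ψ_s` of `((q^r;q^d)_k / (q^d;q^d)_k)^2`, which is even in `s`. -/
noncomputable def evenRatio (d r s : ℤ) (k : ℕ) : RatFunc ℚ :=
  shiftedRatio d r s k * shiftedRatio d r (-s) k

/-- The deformation `c_z` of the factor of `lhsTerm` complementary to two factors `ψ_0`. -/
noncomputable def deformedCoeff (d r z : ℤ) (k : ℕ) : RatFunc ℚ :=
  qint (2 * d * k + r) * shiftedRatio d r 0 k * shiftedRatio d r z k * q ^ ((2 * d - 3 * r - z) * k)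

/-- The deformation `F(x, y, z)` of the left hand side of the congruence. -/
noncomputable def deformedSum (d r : ℤ) (a : ℕ) (x y z : ℤ) : RatFunc ℚ :=
  ∑ k ∈ range (a + 1), deformedCoeff d r z k * evenRatio d r x k * evenRatio d r y k

/-- The factor independent of the deformation in Watson's evaluation of `F(x, y, 0)`. -/
noncomputable def watsonCoeff (d r : ℤ) (a : ℕ) (N : ℤ) (k : ℕ) : RatFunc ℚ :=
  qint N * q ^ (-r * a) * (qzpoch d (2 * r) a / qzpoch d d a) *
    (qzpoch d (d - r) k * qzpoch d r k * q ^ (d * k) / (qzpoch d d k * qzpoch d (2 * r) k))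

/-- The factor independent of the deformation in Watson's evaluation of `F(x, y, -N)`. -/
noncomputable def negWatsonCoeff (d r N : ℤ) (k : ℕ) : RatFunc ℚ :=
  qzpoch d (d - r) k * qzpoch d (r - N) k * q ^ (d * k) / (qzpoch d d k * qzpoch d (2 * r - N) k)

variable {d r N : ℤ} {a : ℕ}

theorem q_zpow_pow (d : ℤ) (k : ℕ) : (q ^ d) ^ k = q ^ (d * k) := by
  rw [zpow_mul, zpow_natCast]

theorem qzpoch_ne_zero {α : ℤ} (h : ∀ i : ℕ, α + d * i ≠ 0) (k : ℕ) : qzpoch d α k ≠ 0 :=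
  prod_ne_zero_iff.2 fun i _ => one_sub_q_zpow_ne_zero (h i)

theorem qzpoch_succ' (d α : ℤ) (k : ℕ) :
    qzpoch d α (k + 1) = (1 - q ^ α) * qzpoch d (α + d) k := by
  rw [← qPochhammer_q_zpow, qPochhammer_succ', ← zpow_add₀ q_ne_zero, qPochhammer_q_zpow]

theorem watsonTerm_q_zpow (hN : N = d * a + r) (s₁ s₂ s₃ s₄ : ℤ) (k : ℕ) :
    watsonTerm (q ^ d) (q ^ r) (q ^ (r + s₁)) (q ^ (r + s₂)) (q ^ (r + s₃)) (q ^ (r + s₄))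
        (q ^ (d - r - s₁ - s₂)) (q ^ (d - r - s₃ - s₄)) a k =
      (1 - q ^ (2 * d * k + r)) * (shiftedRatio d r 0 k * shiftedRatio d r s₁ k *
        shiftedRatio d r s₂ k * shiftedRatio d r s₃ k * shiftedRatio d r s₄ k *
        shiftedRatio d r (-N) k) * q ^ ((2 * d - 3 * r - (s₁ + s₂ + s₃ + s₄) + N) * k) := by
  simp only [watsonTerm, q_zpow_pow, ← zpow_neg, ← zpow_add₀ q_ne_zero, qPochhammer_q_zpow,
    shiftedRatio, mul_assoc]
  subst hN
  push_cast
  ring_nf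

theorem watson_q_zpow (hN : N = d * a + r) (s₁ s₂ s₃ s₄ : ℤ) (h₀ : ∀ i : ℕ, d + d * i ≠ 0)
    (h₁ : ∀ i : ℕ, d - s₁ + d * i ≠ 0) (h₂ : ∀ i : ℕ, d - s₂ + d * i ≠ 0)
    (h₃ : ∀ i : ℕ, d - s₃ + d * i ≠ 0) (h₄ : ∀ i : ℕ, d - s₄ + d * i ≠ 0)
    (h₅ : ∀ i : ℕ, 2 * r + s₃ + s₄ - N + d * i ≠ 0) (h₆ : ∀ i : ℕ, d + N + d * i ≠ 0)
    (h₇ : ∀ j < a, r + s₃ + d * j ≠ 0) (h₈ : ∀ j < a, r + s₄ + d * j ≠ 0) :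
    ∑ k ∈ range (a + 1), qint (2 * d * k + r) *
      (shiftedRatio d r 0 k * shiftedRatio d r s₁ k * shiftedRatio d r s₂ k *
        shiftedRatio d r s₃ k * shiftedRatio d r s₄ k * shiftedRatio d r (-N) k) *
        q ^ ((2 * d - 3 * r - (s₁ + s₂ + s₃ + s₄) + N) * k) =
    qint N * (qzpoch d r a * qzpoch d (d - r - s₃ - s₄) a /
        (qzpoch d (d - s₃) a * qzpoch d (d - s₄) a)) *
      ∑ j ∈ range (a + 1), qzpoch d (d - r - s₁ - s₂) j * qzpoch d (r + s₃) j *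
        qzpoch d (r + s₄) j * qzpoch d (r - N) j * q ^ (d * j) /
        (qzpoch d d j * qzpoch d (d - s₁) j * qzpoch d (d - s₂) j *
          qzpoch d (2 * r + s₃ + s₄ - N) j) := by
  have exp₁ : r + s₂ + (d - r - s₁ - s₂) = d - s₁ := by ring
  have exp₂ : r + s₁ + (d - r - s₁ - s₂) = d - s₂ := by ring
  have exp₃ : r + s₄ + (d - r - s₃ - s₄) = d - s₃ := by ring
  have exp₄ : r + s₃ + (d - r - s₃ - s₄) = d - s₄ := by ring
  have exp₅ : d - (d - r - s₃ - s₄ + d * a) = 2 * r + s₃ + s₄ - N := by rw [hN]; ring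
  have exp₆ : r + d * (a + 1 : ℕ) = d + N := by rw [hN]; push_cast; ring
  have exp₇ : -(d * a) = r - N := by rw [hN]; ring
  have eval := watson (p := q ^ d) (a := q ^ r) (b := q ^ (r + s₁)) (c := q ^ (r + s₂))
    (d := q ^ (r + s₃)) (e := q ^ (r + s₄)) (g := q ^ (d - r - s₁ - s₂))
    (h := q ^ (d - r - s₃ - s₄)) (m := a) (zpow_ne_zero _ q_ne_zero) (zpow_ne_zero _ q_ne_zero)
    (by simp only [← zpow_add₀ q_ne_zero]; ring_nf) (by simp only [← zpow_add₀ q_ne_zero]; ring_nf)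
  simp only [watsonTerm_q_zpow hN, q_zpow_pow, ← zpow_add₀ q_ne_zero, ← zpow_sub₀ q_ne_zero,
    ← zpow_neg, exp₁, exp₂, exp₃, exp₄, exp₅, exp₆, exp₇, qPochhammer_q_zpow, ← qzpoch_succ']
    at eval
  have key := congrArg (· / (1 - q)) (eval (qzpoch_ne_zero h₀) (qzpoch_ne_zero h₃)
    (qzpoch_ne_zero h₄) (qzpoch_ne_zero h₆) (qzpoch_ne_zero h₅) (qzpoch_ne_zero h₁)
    (qzpoch_ne_zero h₂) (fun j hj => one_sub_q_zpow_ne_zero (h₇ j hj))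
    (fun j hj => one_sub_q_zpow_ne_zero (h₈ j hj)))
  rw [qzpoch_succ, add_comm r, ← hN] at key
  simp only [sum_div] at key
  convert key using 1
  · exact sum_congr rfl fun k _ => by rw [qint]; ring
  · rw [qint]; ring

theorem qzpoch_mul_reflect (hN : N = d * a + r) :
    qzpoch d r a * qzpoch d (d - r - N) a =
      q ^ (-r * a) * qzpoch d (2 * r) a * qzpoch d (d - N) a := by
  have reverse (α : ℤ) := qPochhammer_reverse (p := q ^ d) (y := q ^ α)
    (zpow_ne_zero _ q_ne_zero) (zpow_ne_zero _ q_ne_zero) a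
  simp only [q_zpow_pow, ← zpow_add₀ q_ne_zero, ← zpow_sub₀ q_ne_zero, qPochhammer_q_zpow]
    at reverse
  have reverse_r := reverse r
  have reverse_two_mul := reverse (2 * r)
  rw [show d - (r + d * a) = d - N by rw [hN]; ring] at reverse_r
  rw [show d - (2 * r + d * a) = d - r - N by rw [hN]; ring,
    show 2 * r * (a : ℤ) = r * a + r * a by ring, zpow_add₀ q_ne_zero] at reverse_two_mul
  have hP : ∏ i ∈ range a, q ^ (d * i) ≠ 0 :=
    prod_ne_zero_iff.2 fun i _ => zpow_ne_zero _ q_ne_zero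
  have hY : q ^ (r * a) ≠ 0 := zpow_ne_zero _ q_ne_zero
  rw [neg_mul, zpow_neg, mul_assoc, eq_inv_mul_iff_mul_eq₀ hY]
  refine mul_left_cancel₀ (mul_ne_zero hY hP) ?_
  linear_combination qzpoch d r a * reverse_two_mul - qzpoch d (2 * r) a * reverse_r

section

variable (hd : 3 ≤ d) (hr : IsCoprime r d) (hN : N = d * a + r)
include hd hr hN

theorem sub_N_add_mul_ne_zero (i : ℕ) : d - N + d * i ≠ 0 :=
  ne_zero_of_dvd_sub_mul hr (c := -1) (by norm_num) (by simp; omega)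
    ⟨1 - a + i, by rw [hN]; ring⟩

theorem add_N_add_mul_ne_zero (i : ℕ) : d + N + d * i ≠ 0 :=
  ne_zero_of_dvd_sub_mul hr one_ne_zero (by simp; omega) ⟨1 + a + i, by rw [hN]; ring⟩

theorem r_add_N_add_mul_ne_zero (i : ℕ) : r + N + d * i ≠ 0 :=
  ne_zero_of_dvd_sub_mul hr two_ne_zero (by simp; omega) ⟨a + i, by rw [hN]; ring⟩

theorem qzpoch_reflect_div :
    qzpoch d r a * qzpoch d (d - r - N) a / (qzpoch d d a * qzpoch d (d - N) a) =
      q ^ (-r * a) * (qzpoch d (2 * r) a / qzpoch d d a) := by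
  have := qzpoch_ne_zero (fun i : ℕ => show d + d * i ≠ 0 by positivity) a
  have := qzpoch_ne_zero (sub_N_add_mul_ne_zero hd hr hN) a
  rw [qzpoch_mul_reflect hN]
  field_simp

theorem deformedSum_N_zero {y : ℤ} (hy₁ : ∀ i : ℕ, d - y + d * i ≠ 0)
    (hy₂ : ∀ i : ℕ, d + y + d * i ≠ 0) :
    deformedSum d r a N y 0 = ∑ k ∈ range (a + 1), watsonCoeff d r a N k *
      (qzpoch d (r + N) k * qzpoch d (r - N) k * (qzpoch d (d - y) k * qzpoch d (d + y) k)⁻¹) := by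
  have eval := watson_q_zpow hN y (-y) 0 N (fun i => by positivity) hy₁
    (by simpa only [sub_neg_eq_add] using hy₂) (fun i => by rw [sub_zero]; positivity)
    (sub_N_add_mul_ne_zero hd hr hN)
    (fun i => ne_zero_of_dvd_sub_mul hr two_ne_zero (by simp; omega) ⟨i, by ring⟩)
    (add_N_add_mul_ne_zero hd hr hN)
    (fun i _ => ne_zero_of_dvd_sub_mul hr one_ne_zero (by simp; omega) ⟨i, by ring⟩)
    (fun i _ => r_add_N_add_mul_ne_zero hd hr hN i)
  simp only [sub_zero, add_zero, sub_neg_eq_add, qzpoch_reflect_div hd hr hN, mul_sum] at eval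
  rw [deformedSum]
  convert eval using 2 with k _ k _
  · rw [deformedCoeff, evenRatio, evenRatio,
      show 2 * d - 3 * r - 0 = 2 * d - 3 * r - (y + -y + N) + N by ring]
    ring
  · rw [watsonCoeff, show 2 * r + N - N = 2 * r by ring, show d - r - y + y = d - r by ring]
    simp only [div_eq_mul_inv, mul_inv]
    ring

theorem deformedSum_neg_N {x y : ℤ} (hx₁ : ∀ i : ℕ, d - x + d * i ≠ 0)
    (hx₂ : ∀ i : ℕ, d + x + d * i ≠ 0) (hx₃ : ∀ i < a, r + x + d * i ≠ 0)
    (hx₄ : ∀ i < a, r - x + d * i ≠ 0) (hy₁ : ∀ i : ℕ, d - y + d * i ≠ 0)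
    (hy₂ : ∀ i : ℕ, d + y + d * i ≠ 0) :
    deformedSum d r a x y (-N) =
      ∑ j ∈ range (a + 1), qint N * (qzpoch d r a * qzpoch d (d - r) a) * negWatsonCoeff d r N j *
        ((qzpoch d (d - x) a * qzpoch d (d + x) a)⁻¹ * (qzpoch d (r + x) j * qzpoch d (r - x) j)) *
        (qzpoch d (d - y) j * qzpoch d (d + y) j)⁻¹ := by
  have eval := watson_q_zpow hN y (-y) x (-x) (fun i => by positivity) hy₁
    (by simpa only [sub_neg_eq_add] using hy₂) hx₁ (by simpa only [sub_neg_eq_add] using hx₂)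
    (fun i => ne_zero_of_dvd_sub_mul hr one_ne_zero (by simp; omega)
      ⟨i - a, by rw [hN]; ring⟩)
    (add_N_add_mul_ne_zero hd hr hN) hx₃ (by simpa only [← sub_eq_add_neg] using hx₄)
  simp only [mul_sum] at eval
  rw [deformedSum]
  convert eval using 2 with k _ k _
  · rw [deformedCoeff, evenRatio, evenRatio,
      show 2 * d - 3 * r - -N = 2 * d - 3 * r - (y + -y + x + -x) + N by ring]
    ring
  · rw [negWatsonCoeff, show 2 * r + x + -x - N = 2 * r - N by ring,
      show d - r - x - -x = d - r by ring, show d - r - y - -y = d - r by ring]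
    simp only [div_eq_mul_inv, mul_inv, sub_neg_eq_add, ← sub_eq_add_neg]
    ring

end

end WatsonSpecialization

section EvenExpansion

/-- The term `q^s / (1 - q^s)^2` of a `q`-harmonic sum of order two. -/
noncomputable def harmonicTwoTerm (s : ℤ) : RatFunc ℚ := q ^ s / (1 - q ^ s) ^ 2

/-- The `q`-harmonic sum of order two along the progression `α, α + d, α + 2d, …`. -/
noncomputable def harmonicTwoSum (d α : ℤ) (k : ℕ) : RatFunc ℚ :=
  ∑ i ∈ range k, harmonicTwoTerm (α + d * i)

/-- The parameter `ε = (1 - q^N)^2 / q^N`, in which quantities even in `N` are expanded. -/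
noncomputable def evenParameter (N : ℤ) : RatFunc ℚ := (1 - q ^ N) ^ 2 * q ^ (-N)

/-- The quotient of `(q^(α+N);q^d)_k (q^(α-N);q^d)_k` by its value at `N = 0`. -/
noncomputable def evenFactor (d α N : ℤ) (k : ℕ) : RatFunc ℚ :=
  ∏ i ∈ range k, (1 - evenParameter N * harmonicTwoTerm (α + d * i))

theorem one_sub_q_zpow_add_mul_sub (N : ℤ) {s : ℤ} (hs : s ≠ 0) :
    (1 - q ^ (s + N)) * (1 - q ^ (s - N)) =
      (1 - q ^ s) ^ 2 * (1 - evenParameter N * harmonicTwoTerm s) := by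
  have := one_sub_q_zpow_ne_zero hs
  have := zpow_ne_zero N q_ne_zero
  rw [evenParameter, harmonicTwoTerm, zpow_add₀ q_ne_zero, zpow_sub₀ q_ne_zero, zpow_neg]
  field_simp
  ring

theorem qzpoch_add_mul_sub (N : ℤ) {d α : ℤ} (hα : ∀ i : ℕ, α + d * i ≠ 0) (k : ℕ) :
    qzpoch d (α + N) k * qzpoch d (α - N) k = qzpoch d α k ^ 2 * evenFactor d α N k := by
  rw [qzpoch, qzpoch, qzpoch, evenFactor, ← prod_mul_distrib, ← prod_pow, ← prod_mul_distrib]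
  refine prod_congr rfl fun i _ => ?_
  rw [← one_sub_q_zpow_add_mul_sub N (hα i), add_right_comm, sub_add_eq_add_sub]

theorem evenFactor_zero (d α : ℤ) (k : ℕ) : evenFactor d α 0 k = 1 := by
  simp [evenFactor, evenParameter]

theorem qint_sq_mul_correctionSum (d r N : ℤ) (k : ℕ) :
    qint N ^ 2 * correctionSum d r k =
      (1 - q ^ N) ^ 2 * (harmonicTwoSum d r k + harmonicTwoSum d d k) := by
  have := one_sub_q_ne_zero
  rw [correctionSum, harmonicTwoSum, harmonicTwoSum, add_comm, ← sum_add_distrib, mul_sum, mul_sum]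
  refine sum_congr rfl fun i _ => ?_
  simp only [harmonicTwoTerm, qint, div_pow, div_div_eq_mul_div]
  field_simp

section

variable {m : ℕ} [NeZero m] {d α N s : ℤ} {k : ℕ}

local notation "ν" => cyclotomicValuation m

theorem harmonicTwoTerm_mem_integer (hs : ¬ (m : ℤ) ∣ s) : harmonicTwoTerm s ∈ (ν).integer :=
  div_mem_integer (q_zpow_mem_integer s)
    (by rw [map_pow, cyclotomicValuation_one_sub_q_zpow_of_not_dvd hs, one_pow])

theorem harmonicTwoSum_mem_integer (hα : ∀ i < k, ¬ (m : ℤ) ∣ α + d * i) :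
    harmonicTwoSum d α k ∈ (ν).integer :=
  sum_mem fun _ hi => harmonicTwoTerm_mem_integer (hα _ (mem_range.1 hi))

theorem evenParameter_mem_orderGE (hN : (m : ℤ) ∣ N) : evenParameter N ∈ orderGE ν 2 :=
  mul_integer_mem_orderGE (pow_mem_orderGE (one_sub_q_zpow_mem_orderGE hN) 2)
    (q_zpow_mem_integer _)

theorem valuation_one_sub_evenParameter_mul (hN : (m : ℤ) ∣ N) (hs : ¬ (m : ℤ) ∣ s) :
    ν (1 - evenParameter N * harmonicTwoTerm s) = 1 := by
  have hs₀ : s ≠ 0 := fun h₀ => hs (h₀ ▸ dvd_zero _)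
  have eq := congrArg ν (one_sub_q_zpow_add_mul_sub N hs₀)
  rwa [map_mul, map_mul, map_pow, cyclotomicValuation_one_sub_q_zpow_of_not_dvd hs,
    cyclotomicValuation_one_sub_q_zpow_of_not_dvd ((dvd_add_left hN).not.2 hs),
    cyclotomicValuation_one_sub_q_zpow_of_not_dvd ((dvd_sub_left hN).not.2 hs),
    one_pow, one_mul, one_mul, eq_comm] at eq

theorem evenFactor_smodEq (hN : (m : ℤ) ∣ N) (hα : ∀ i < k, ¬ (m : ℤ) ∣ α + d * i) :
    evenFactor d α N k ≡ 1 + evenParameter N * -harmonicTwoSum d α k [SMOD orderGE ν 4] := by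
  rw [harmonicTwoSum, ← sum_neg_distrib]
  refine prod_smodEq_one_add_mul_sum (by norm_num) (by norm_num) (by norm_num)
    (evenParameter_mem_orderGE hN) _ (fun i _ => ?_)
    (fun i hi => neg_mem (harmonicTwoTerm_mem_integer (hα i (mem_range.1 hi))))
  rw [mul_neg, ← sub_eq_add_neg]

theorem inv_evenFactor_smodEq (hN : (m : ℤ) ∣ N) (hα : ∀ i < k, ¬ (m : ℤ) ∣ α + d * i) :
    (evenFactor d α N k)⁻¹ ≡ 1 + evenParameter N * harmonicTwoSum d α k [SMOD orderGE ν 4] := by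
  have int_term : ∀ i ∈ range k, harmonicTwoTerm (α + d * i) ∈ (ν).integer := fun i hi =>
    harmonicTwoTerm_mem_integer (hα i (mem_range.1 hi))
  rw [evenFactor, ← prod_inv_distrib]
  exact prod_smodEq_one_add_mul_sum (by norm_num) (by norm_num) (by norm_num)
    (evenParameter_mem_orderGE hN) _ (fun i hi => inv_one_sub_mul_smodEq (by norm_num)
      (evenParameter_mem_orderGE hN) (int_term i hi)
      (valuation_one_sub_evenParameter_mul hN (hα i (mem_range.1 hi)))) int_term

theorem sub_one_mem_orderGE_two_of_smodEq {f g : RatFunc ℚ} (hN : (m : ℤ) ∣ N)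
    (hg : g ∈ (ν).integer) (h : f ≡ 1 + evenParameter N * g [SMOD orderGE ν 4]) :
    f - 1 ∈ orderGE ν 2 := by
  have := add_mem (orderGE_anti (by norm_num : (2 : ℤ) ≤ 4) (SModEq.sub_mem.1 h))
    (mul_integer_mem_orderGE (evenParameter_mem_orderGE hN) hg)
  convert this using 1
  ring

theorem mem_integer_of_sub_one_mem {f : RatFunc ℚ} (h : f - 1 ∈ orderGE ν 2) : f ∈ (ν).integer :=
  mem_integer_of_smodEq zero_le_two (SModEq.sub_mem.2 h) (one_mem _)

end

end EvenExpansion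

section WatsonExpansion

open WithZero

namespace ReflectionIndex

variable {m a : ℕ} [NeZero m] {d r N : ℤ} {k : ℕ}

local notation "ν" => cyclotomicValuation m

section

variable (H : ReflectionIndex m a d r) (hN : (m : ℤ) ∣ N) (hk : k ≤ a)
include H hk

theorem harmonicTwoSum_r_mem_integer : harmonicTwoSum d r k ∈ (ν).integer :=
  harmonicTwoSum_mem_integer fun _ hi => H.not_dvd_add_mul (hi.trans_le hk)

theorem harmonicTwoSum_d_mem_integer : harmonicTwoSum d d k ∈ (ν).integer :=
  harmonicTwoSum_mem_integer fun _ hi => H.not_dvd_self_add_mul (by have := H.lt; omega)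

include hN

theorem evenFactor_r_smodEq :
    evenFactor d r N k ≡ 1 + evenParameter N * -harmonicTwoSum d r k [SMOD orderGE ν 4] :=
  evenFactor_smodEq hN fun _ hi => H.not_dvd_add_mul (hi.trans_le hk)

theorem inv_evenFactor_d_smodEq :
    (evenFactor d d N k)⁻¹ ≡ 1 + evenParameter N * harmonicTwoSum d d k [SMOD orderGE ν 4] :=
  inv_evenFactor_smodEq hN fun _ hi => H.not_dvd_self_add_mul (by have := H.lt; omega)

theorem evenFactor_r_sub_one_mem : evenFactor d r N k - 1 ∈ orderGE ν 2 :=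
  sub_one_mem_orderGE_two_of_smodEq hN (neg_mem (H.harmonicTwoSum_r_mem_integer hk))
    (H.evenFactor_r_smodEq hN hk)

theorem inv_evenFactor_d_sub_one_mem : (evenFactor d d N k)⁻¹ - 1 ∈ orderGE ν 2 :=
  sub_one_mem_orderGE_two_of_smodEq hN (H.harmonicTwoSum_d_mem_integer hk)
    (H.inv_evenFactor_d_smodEq hN hk)

theorem correction_smodEq :
    1 - qint N ^ 2 * (2 - q ^ N) * correctionSum d r k ≡
      1 + evenParameter N * (-harmonicTwoSum d r k + -harmonicTwoSum d d k)
      [SMOD orderGE ν 4] := by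
  have error := mul_integer_mem_orderGE
    (mul_mem_orderGE (pow_mem_orderGE (one_sub_q_zpow_mem_orderGE hN) 2)
      (evenParameter_mem_orderGE hN) (by norm_num : (4 : ℤ) ≤ _))
    (add_mem (H.harmonicTwoSum_r_mem_integer hk) (H.harmonicTwoSum_d_mem_integer hk))
  have := zpow_ne_zero N q_ne_zero
  rw [SModEq.sub_mem, mul_right_comm, qint_sq_mul_correctionSum]
  convert error using 1
  rw [evenParameter, zpow_neg]
  field_simp
  ring

theorem evenFactor_mul_two_sub_smodEq :
    evenFactor d r N k * (2 - (evenFactor d d N k)⁻¹) ≡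
      1 - qint N ^ 2 * (2 - q ^ N) * correctionSum d r k [SMOD orderGE ν 4] := by
  have two_sub : 2 - (evenFactor d d N k)⁻¹ ≡ 1 + evenParameter N * -harmonicTwoSum d d k
      [SMOD orderGE ν 4] := by
    convert (SModEq.refl (2 : RatFunc ℚ)).sub (H.inv_evenFactor_d_smodEq hN hk) using 1
    ring
  exact (one_add_mul_mul_smodEq (by norm_num) (by norm_num) (by norm_num)
    (evenParameter_mem_orderGE hN) (H.evenFactor_r_smodEq hN hk) two_sub
    (neg_mem (H.harmonicTwoSum_r_mem_integer hk))
    (neg_mem (H.harmonicTwoSum_d_mem_integer hk))).trans (H.correction_smodEq hN hk).symm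

variable (hma : 2 * m ≤ 3 * a + 1)
include hma

theorem watsonCoeff_mem_orderGE_two : watsonCoeff d r a N k ∈ orderGE ν 2 := by
  have ham := H.lt
  have mod_two_mul : 2 * a % m = 2 * a - m := by
    rw [Nat.mod_eq_sub_mod (by omega), Nat.mod_eq_of_lt (by omega)]
  have prefactor : qzpoch d (2 * r) a / qzpoch d d a ∈ orderGE ν 1 :=
    mem_orderGE_of_eq (H.valuation_qzpoch_two_mul_div a)
      (by rw [mod_two_mul, Nat.mod_eq_of_lt ham, if_pos (by omega)])
  have coeff : ν (qzpoch d (d - r) k * qzpoch d r k * q ^ (d * k) /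
      (qzpoch d d k * qzpoch d (2 * r) k)) =
        exp (-((if m - 1 - a < k then 1 else 0) - if 2 * a - m < k then 1 else 0)) := by
    simp only [map_div₀, map_mul, H.valuation_qzpoch_sub, H.valuation_qzpoch_r,
      H.valuation_qzpoch_d, H.valuation_qzpoch_two_mul, cyclotomicValuation_q_zpow, mul_one,
      Nat.mod_eq_of_lt (hk.trans_lt ham), mod_two_mul, if_neg hk.not_gt]
    rw [← exp_add, ← exp_add, ← exp_sub]
    congr 1
    ring
  refine mul_integer_mem_orderGE (mul_mem_orderGE (mul_integer_mem_orderGE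
    (qint_mem_orderGE H.one_lt hN) (q_zpow_mem_integer _)) prefactor (by norm_num))
    (mem_orderGE_zero.1 (mem_orderGE_of_eq coeff ?_))
  split_ifs <;> omega

end

section

variable (H : ReflectionIndex m a d r) (hN : N = d * a + r) (hma : 2 * m ≤ 3 * a + 1)
include H hN hma

theorem negWatsonCoeff_mem_integer (hk : k ≤ a) : negWatsonCoeff d r N k ∈ (ν).integer := by
  have hd := H.three_le
  have ham := H.lt
  have hkm := hk.trans_lt ham
  obtain ⟨c, hc⟩ := H.dvd
  have index_cast : ((2 * a - m : ℕ) : ℤ) = 2 * a - m := by omega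
  have order_denominator : ν (qzpoch d (2 * r - N) k) =
      exp (-(((k / m : ℕ) : ℤ) + if 2 * a - m < k % m then 1 else 0)) :=
    cyclotomicValuation_qzpoch H.coprime_right
      (fun i => ne_zero_of_dvd_sub_mul H.coprime_left one_ne_zero (by simp; omega)
        ⟨i - a, by rw [hN]; ring⟩)
      (by omega)
      ⟨c - d, by rw [index_cast]; linear_combination hc - hN⟩ k
  have unit_numerator : ν (qzpoch d (r - N) k) = 1 :=
    H.valuation_qzpoch ((dvd_neg.2 H.dvd).trans (dvd_of_eq (by rw [hN]; ring))) hk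
  have order : ν (negWatsonCoeff d r N k) =
      exp (-((if m - 1 - a < k then 1 else 0) - if 2 * a - m < k then 1 else 0)) := by
    simp only [negWatsonCoeff, map_div₀, map_mul, H.valuation_qzpoch_sub, unit_numerator,
      H.valuation_qzpoch_d, order_denominator, cyclotomicValuation_q_zpow, mul_one,
      Nat.mod_eq_of_lt hkm, Nat.div_eq_of_lt hkm]
    rw [← exp_add, ← exp_sub]
    congr 1
    ring
  refine mem_orderGE_zero.1 (mem_orderGE_of_eq order ?_)
  split_ifs <;> omega

theorem two_mul_deformedSum_sub_smodEq :
    2 * deformedSum d r a N 0 0 - deformedSum d r a N N 0 ≡ rhsSum d r a N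
      [SMOD orderGE ν 6] := by
  have hdvd : (m : ℤ) ∣ N := hN ▸ H.dvd
  rw [deformedSum_N_zero H.three_le H.coprime_left hN
      (by simpa only [sub_zero] using H.self_add_mul_ne_zero)
      (by simpa only [add_zero] using H.self_add_mul_ne_zero),
    deformedSum_N_zero H.three_le H.coprime_left hN
      (sub_N_add_mul_ne_zero H.three_le H.coprime_left hN)
      (add_N_add_mul_ne_zero H.three_le H.coprime_left hN),
    rhsSum, mul_sum, mul_sum, ← sum_sub_distrib]
  refine SModEq.sum fun k hk => ?_
  have hk : k ≤ a := mem_range_succ_iff.1 hk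
  have error := mul_mem_orderGE (H.watsonCoeff_mem_orderGE_two hdvd hk hma)
    (integer_mul_mem_orderGE (pow_mem (H.qzpochRatio_mem_integer k) 2)
      (SModEq.sub_mem.1 (H.evenFactor_mul_two_sub_smodEq hdvd hk))) (by norm_num : (6 : ℤ) ≤ _)
  rw [SModEq.sub_mem]
  convert error using 1
  rw [qzpoch_add_mul_sub N H.add_mul_ne_zero, mul_comm (qzpoch d (d - N) k),
    qzpoch_add_mul_sub N H.self_add_mul_ne_zero, sub_zero, add_zero, watsonCoeff, rhsTerm,
    qzpochRatio]
  simp only [div_eq_mul_inv, mul_inv, mul_pow, inv_pow]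
  ring

end

end ReflectionIndex

end WatsonExpansion

section OddExpansion

/-- The term `q^s / (1 - q^s)` of a `q`-harmonic sum. -/
noncomputable def harmonicTerm (s : ℤ) : RatFunc ℚ := q ^ s / (1 - q ^ s)

/-- The `q`-harmonic sum along the progression `α, α + d, α + 2d, …`. -/
noncomputable def harmonicSum (d α : ℤ) (k : ℕ) : RatFunc ℚ :=
  ∑ i ∈ range k, harmonicTerm (α + d * i)

/-- The quotient of `(q^(α+N);q^d)_k` by its value at `N = 0`. -/
noncomputable def shiftFactor (d α N : ℤ) (k : ℕ) : RatFunc ℚ :=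
  ∏ i ∈ range k, (1 - (q ^ N - 1) * harmonicTerm (α + d * i))

theorem one_sub_q_zpow_add (N : ℤ) {s : ℤ} (hs : s ≠ 0) :
    1 - q ^ (s + N) = (1 - q ^ s) * (1 - (q ^ N - 1) * harmonicTerm s) := by
  have := one_sub_q_zpow_ne_zero hs
  rw [harmonicTerm, zpow_add₀ q_ne_zero]
  field_simp
  ring

theorem qzpoch_add (N : ℤ) {d α : ℤ} (hα : ∀ i : ℕ, α + d * i ≠ 0) (k : ℕ) :
    qzpoch d (α + N) k = qzpoch d α k * shiftFactor d α N k := by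
  rw [qzpoch, qzpoch, shiftFactor, ← prod_mul_distrib]
  exact prod_congr rfl fun i _ => by rw [← one_sub_q_zpow_add N (hα i), add_right_comm]

theorem harmonicTerm_neg {s : ℤ} (hs : s ≠ 0) : harmonicTerm (-s) = -(harmonicTerm s + 1) := by
  have := one_sub_q_zpow_ne_zero hs
  have := zpow_ne_zero s q_ne_zero
  rw [harmonicTerm, harmonicTerm, one_sub_q_zpow_neg, zpow_neg]
  field_simp
  ring

theorem harmonicTwoTerm_neg {s : ℤ} (hs : s ≠ 0) : harmonicTwoTerm (-s) = harmonicTwoTerm s := by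
  have := one_sub_q_zpow_ne_zero hs
  have := zpow_ne_zero s q_ne_zero
  rw [harmonicTwoTerm, harmonicTwoTerm, one_sub_q_zpow_neg, zpow_neg]
  field_simp

variable {m : ℕ} [NeZero m] {d α N s t : ℤ} {k : ℕ}

local notation "ν" => cyclotomicValuation m

theorem harmonicTerm_mem_integer (hs : ¬ (m : ℤ) ∣ s) : harmonicTerm s ∈ (ν).integer :=
  div_mem_integer (q_zpow_mem_integer s) (cyclotomicValuation_one_sub_q_zpow_of_not_dvd hs)

theorem harmonicSum_mem_integer (hα : ∀ i < k, ¬ (m : ℤ) ∣ α + d * i) :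
    harmonicSum d α k ∈ (ν).integer :=
  sum_mem fun _ hi => harmonicTerm_mem_integer (hα _ (mem_range.1 hi))

theorem q_zpow_sub_one_mem_orderGE (hN : (m : ℤ) ∣ N) : q ^ N - 1 ∈ orderGE ν 1 := by
  rw [← neg_sub]
  exact neg_mem (one_sub_q_zpow_mem_orderGE hN)

theorem valuation_one_sub_mul_harmonicTerm (hN : (m : ℤ) ∣ N) (hs : ¬ (m : ℤ) ∣ s) :
    ν (1 - (q ^ N - 1) * harmonicTerm s) = 1 := by
  have hs₀ : s ≠ 0 := fun h₀ => hs (h₀ ▸ dvd_zero _)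
  have eq := congrArg ν (one_sub_q_zpow_add N hs₀)
  rwa [map_mul, cyclotomicValuation_one_sub_q_zpow_of_not_dvd hs,
    cyclotomicValuation_one_sub_q_zpow_of_not_dvd ((dvd_add_left hN).not.2 hs), one_mul,
    eq_comm] at eq

theorem shiftFactor_smodEq (hN : (m : ℤ) ∣ N) (hα : ∀ i < k, ¬ (m : ℤ) ∣ α + d * i) :
    shiftFactor d α N k ≡ 1 + (q ^ N - 1) * -harmonicSum d α k [SMOD orderGE ν 2] := by
  rw [harmonicSum, ← sum_neg_distrib]
  refine prod_smodEq_one_add_mul_sum (by norm_num) (by norm_num) (by norm_num)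
    (q_zpow_sub_one_mem_orderGE hN) _ (fun i _ => ?_)
    (fun i hi => neg_mem (harmonicTerm_mem_integer (hα i (mem_range.1 hi))))
  rw [mul_neg, ← sub_eq_add_neg]

theorem inv_shiftFactor_smodEq (hN : (m : ℤ) ∣ N) (hα : ∀ i < k, ¬ (m : ℤ) ∣ α + d * i) :
    (shiftFactor d α N k)⁻¹ ≡ 1 + (q ^ N - 1) * harmonicSum d α k [SMOD orderGE ν 2] := by
  have int_term : ∀ i ∈ range k, harmonicTerm (α + d * i) ∈ (ν).integer := fun i hi =>
    harmonicTerm_mem_integer (hα i (mem_range.1 hi))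
  rw [shiftFactor, ← prod_inv_distrib]
  exact prod_smodEq_one_add_mul_sum (by norm_num) (by norm_num) (by norm_num)
    (q_zpow_sub_one_mem_orderGE hN) _ (fun i hi => inv_one_sub_mul_smodEq (by norm_num)
      (q_zpow_sub_one_mem_orderGE hN) (int_term i hi)
      (valuation_one_sub_mul_harmonicTerm hN (hα i (mem_range.1 hi)))) int_term

theorem shiftFactor_neg_smodEq (hN : (m : ℤ) ∣ N) (hα : ∀ i < k, ¬ (m : ℤ) ∣ α + d * i) :
    shiftFactor d α (-N) k ≡ 1 + (q ^ N - 1) * harmonicSum d α k [SMOD orderGE ν 2] := by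
  have δ_mem := q_zpow_sub_one_mem_orderGE hN
  have error := mul_integer_mem_orderGE (mul_mem_orderGE δ_mem δ_mem (by norm_num : (2 : ℤ) ≤ _))
    (mul_mem (q_zpow_mem_integer (-N)) (harmonicSum_mem_integer hα))
  refine (shiftFactor_smodEq (dvd_neg.2 hN) hα).trans (SModEq.sub_mem.2 ?_)
  convert neg_mem error using 1
  have := zpow_ne_zero N q_ne_zero
  rw [zpow_neg]
  field_simp
  ring

theorem q_zpow_mul_natCast_smodEq (hN : (m : ℤ) ∣ N) (k : ℕ) :
    q ^ (N * k) ≡ 1 + (q ^ N - 1) * k [SMOD orderGE ν 2] := by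
  have power := prod_smodEq_one_add_mul_sum (e₂ := 2) (by norm_num) (by norm_num) (by norm_num)
    (q_zpow_sub_one_mem_orderGE hN) (range k) (u := fun _ => q ^ N) (l := fun _ => 1)
    (fun i _ => by rw [mul_one, add_sub_cancel]) (fun i _ => one_mem _)
  simpa only [prod_const, sum_const, card_range, nsmul_eq_mul, mul_one, q_zpow_pow] using power

theorem harmonicTerm_add_add_one_mem_orderGE (hs : ¬ (m : ℤ) ∣ s) (ht : ¬ (m : ℤ) ∣ t)
    (h : (m : ℤ) ∣ s + t) : harmonicTerm s + harmonicTerm t + 1 ∈ orderGE ν 1 := by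
  have ht₀ : t ≠ 0 := fun h₀ => ht (h₀ ▸ dvd_zero _)
  rw [← sub_neg_eq_add] at h
  have congr_neg : harmonicTerm s ≡ harmonicTerm (-t) [SMOD orderGE ν 1] :=
    smodEq_div (q_zpow_smodEq h) (one_sub_q_zpow_smodEq h) (q_zpow_mem_integer _)
      (cyclotomicValuation_one_sub_q_zpow_of_not_dvd hs)
      (cyclotomicValuation_one_sub_q_zpow_of_not_dvd (dvd_neg.not.2 ht))
  rwa [SModEq.sub_mem, harmonicTerm_neg ht₀, sub_neg_eq_add, ← add_assoc] at congr_neg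

theorem harmonicTwoTerm_sub_mem_orderGE (hs : ¬ (m : ℤ) ∣ s) (ht : ¬ (m : ℤ) ∣ t)
    (h : (m : ℤ) ∣ s + t) : harmonicTwoTerm s - harmonicTwoTerm t ∈ orderGE ν 1 := by
  have ht₀ : t ≠ 0 := fun h₀ => ht (h₀ ▸ dvd_zero _)
  rw [← sub_neg_eq_add] at h
  have congr_neg : harmonicTwoTerm s ≡ harmonicTwoTerm (-t) [SMOD orderGE ν 1] :=
    smodEq_div (q_zpow_smodEq h)
      (smodEq_pow (one_sub_q_zpow_smodEq h) (one_sub_q_zpow_mem_integer _)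
        (one_sub_q_zpow_mem_integer _) 2) (q_zpow_mem_integer _)
      (by rw [map_pow, cyclotomicValuation_one_sub_q_zpow_of_not_dvd hs, one_pow])
      (by rw [map_pow, cyclotomicValuation_one_sub_q_zpow_of_not_dvd (dvd_neg.not.2 ht), one_pow])
  rwa [SModEq.sub_mem, harmonicTwoTerm_neg ht₀] at congr_neg

end OddExpansion

section SecondDifference

/-- The second difference `Σ c_z (ψ_N - ψ_0)^2 = F(N,N,z) - F(N,0,z) - F(0,N,z) + F(0,0,z)`. -/
noncomputable def secondDifference (d r : ℤ) (a : ℕ) (N z : ℤ) : RatFunc ℚ :=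
  ∑ k ∈ range (a + 1), deformedCoeff d r z k * (evenRatio d r N k - evenRatio d r 0 k) ^ 2

/-- The first order coefficient of `c_(-N) / c_0` in powers of `q^N - 1`. -/
noncomputable def coeffSlope (d r : ℤ) (k : ℕ) : RatFunc ℚ :=
  harmonicSum d r k + harmonicSum d d k + k

/-- The first order coefficient of `ψ_N / ψ_0` in powers of `evenParameter N`. -/
noncomputable def ratioSlope (d r : ℤ) (k : ℕ) : RatFunc ℚ :=
  harmonicTwoSum d d k - harmonicTwoSum d r k

variable {d r N : ℤ} {a k : ℕ}

theorem secondDifference_eq (d r : ℤ) (a : ℕ) (N z : ℤ) :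
    secondDifference d r a N z = deformedSum d r a N N z - deformedSum d r a N 0 z -
      (deformedSum d r a 0 N z - deformedSum d r a 0 0 z) := by
  simp only [secondDifference, deformedSum, ← sum_sub_distrib]
  exact sum_congr rfl fun k _ => by ring

theorem deformedSum_comm (d r : ℤ) (a : ℕ) (x y z : ℤ) :
    deformedSum d r a x y z = deformedSum d r a y x z :=
  sum_congr rfl fun k _ => by ring

theorem shiftedRatio_zero (d r : ℤ) (k : ℕ) : shiftedRatio d r 0 k = qzpochRatio d r k := by
  rw [shiftedRatio, qzpochRatio, add_zero, sub_zero]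

theorem deformedCoeff_zero_mul (d r : ℤ) (k : ℕ) :
    deformedCoeff d r 0 k * evenRatio d r 0 k ^ 2 = lhsTerm d r k := by
  rw [deformedCoeff, evenRatio, lhsTerm, neg_zero, shiftedRatio_zero, sub_zero]
  ring

theorem deformedSum_zero (d r : ℤ) (a : ℕ) :
    deformedSum d r a 0 0 0 = ∑ k ∈ range (a + 1), lhsTerm d r k :=
  sum_congr rfl fun k _ => by rw [← deformedCoeff_zero_mul, mul_assoc, ← pow_two]

theorem evenRatio_eq_mul (hr : ∀ i : ℕ, r + d * i ≠ 0) (hd : ∀ i : ℕ, d + d * i ≠ 0) (N : ℤ)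
    (k : ℕ) :
    evenRatio d r N k = evenRatio d r 0 k * (evenFactor d r N k * (evenFactor d d N k)⁻¹) := by
  have denominators := qzpoch_add_mul_sub N hd k
  rw [mul_comm] at denominators
  rw [evenRatio, evenRatio, neg_zero, shiftedRatio_zero, shiftedRatio, shiftedRatio,
    sub_neg_eq_add, ← sub_eq_add_neg, div_mul_div_comm, qzpoch_add_mul_sub N hr, denominators,
    qzpochRatio]
  simp only [div_eq_mul_inv, mul_inv]
  ring

theorem deformedCoeff_neg_eq_mul (hr : ∀ i : ℕ, r + d * i ≠ 0) (hd : ∀ i : ℕ, d + d * i ≠ 0)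
    (N : ℤ) (k : ℕ) :
    deformedCoeff d r (-N) k = deformedCoeff d r 0 k *
      (shiftFactor d r (-N) k * (shiftFactor d d N k)⁻¹ * q ^ (N * k)) := by
  rw [deformedCoeff, deformedCoeff, shiftedRatio_zero, shiftedRatio, qzpoch_add _ hr,
    sub_neg_eq_add, qzpoch_add _ hd, qzpochRatio,
    show (2 * d - 3 * r - -N) * (k : ℤ) = (2 * d - 3 * r - 0) * k + N * k by ring,
    zpow_add₀ q_ne_zero]
  simp only [div_eq_mul_inv, mul_inv]
  ring

namespace ReflectionIndex

variable {m : ℕ}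

section

variable (H : ReflectionIndex m a d r) (hN : N = d * a + r)
include H hN

theorem deformedSum_neg_N_eq_evenFactor {x y : ℤ} (hx : x = 0 ∨ x = N) (hy : y = 0 ∨ y = N) :
    deformedSum d r a x y (-N) =
      ∑ k ∈ range (a + 1), qint N * (qzpoch d r a * qzpoch d (d - r) a) * negWatsonCoeff d r N k *
        ((qzpoch d d a ^ 2)⁻¹ * qzpoch d r k ^ 2 * (qzpoch d d k ^ 2)⁻¹) *
        (evenFactor d r x k * (evenFactor d d x a)⁻¹) * (evenFactor d d y k)⁻¹ := by
  have hd := H.three_le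
  have hr := H.coprime_left
  have sub_ne : ∀ x : ℤ, x = 0 ∨ x = N → ∀ i : ℕ, d - x + d * i ≠ 0 := by
    rintro x (rfl | rfl) i
    · simpa only [sub_zero] using H.self_add_mul_ne_zero i
    · exact sub_N_add_mul_ne_zero hd hr hN i
  have add_ne : ∀ x : ℤ, x = 0 ∨ x = N → ∀ i : ℕ, d + x + d * i ≠ 0 := by
    rintro x (rfl | rfl) i
    · simpa only [add_zero] using H.self_add_mul_ne_zero i
    · exact add_N_add_mul_ne_zero hd hr hN i
  have r_add_ne : ∀ i < a, r + x + d * i ≠ 0 := fun i _ => by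
    rcases hx with rfl | rfl
    · simpa only [add_zero] using H.add_mul_ne_zero i
    · exact r_add_N_add_mul_ne_zero hd hr hN i
  have r_sub_ne : ∀ i < a, r - x + d * i ≠ 0 := fun i hi => by
    rcases hx with rfl | rfl
    · simpa only [sub_zero] using H.add_mul_ne_zero i
    · rw [hN, show r - (d * a + r) + d * i = d * (i - a : ℤ) by ring]
      exact mul_ne_zero (by omega) (by omega)
  rw [deformedSum_neg_N hd hr hN (sub_ne x hx) (add_ne x hx) r_add_ne r_sub_ne (sub_ne y hy)
    (add_ne y hy)]
  refine sum_congr rfl fun k _ => ?_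
  rw [mul_comm (qzpoch d (d - x) a), mul_comm (qzpoch d (d - y) k),
    qzpoch_add_mul_sub x H.self_add_mul_ne_zero, qzpoch_add_mul_sub y H.self_add_mul_ne_zero,
    qzpoch_add_mul_sub x H.add_mul_ne_zero]
  simp only [mul_inv]
  ring

theorem secondDifference_neg_N_eq :
    secondDifference d r a N (-N) =
      ∑ k ∈ range (a + 1), qint N * (qzpoch d r a * qzpoch d (d - r) a) * negWatsonCoeff d r N k *
        ((qzpoch d d a ^ 2)⁻¹ * qzpoch d r k ^ 2 * (qzpoch d d k ^ 2)⁻¹) *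
        ((evenFactor d r N k * (evenFactor d d N a)⁻¹ - 1) * ((evenFactor d d N k)⁻¹ - 1)) := by
  rw [secondDifference_eq, H.deformedSum_neg_N_eq_evenFactor hN (.inr rfl) (.inr rfl),
    H.deformedSum_neg_N_eq_evenFactor hN (.inr rfl) (.inl rfl),
    H.deformedSum_neg_N_eq_evenFactor hN (.inl rfl) (.inr rfl),
    H.deformedSum_neg_N_eq_evenFactor hN (.inl rfl) (.inl rfl)]
  simp only [← sum_sub_distrib, evenFactor_zero, inv_one, mul_one]
  exact sum_congr rfl fun k _ => by ring

end

variable [NeZero m]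

local notation "ν" => cyclotomicValuation m

theorem lhsTerm_mem_integer (H : ReflectionIndex m a d r) (k : ℕ) :
    lhsTerm d r k ∈ (ν).integer :=
  mul_mem (mul_mem (qint_mem_integer H.one_lt _) (pow_mem (H.qzpochRatio_mem_integer k) 6))
    (q_zpow_mem_integer _)

theorem harmonicSum_r_mem_integer (H : ReflectionIndex m a d r) (hk : k ≤ a) :
    harmonicSum d r k ∈ (ν).integer :=
  harmonicSum_mem_integer fun _ hi => H.not_dvd_add_mul (hi.trans_le hk)

theorem harmonicSum_d_mem_integer (H : ReflectionIndex m a d r) (hk : k ≤ a) :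
    harmonicSum d d k ∈ (ν).integer :=
  harmonicSum_mem_integer fun _ hi => H.not_dvd_self_add_mul (by have := H.lt; omega)

theorem coeffSlope_mem_integer (H : ReflectionIndex m a d r) (hk : k ≤ a) :
    coeffSlope d r k ∈ (ν).integer :=
  add_mem (add_mem (H.harmonicSum_r_mem_integer hk) (H.harmonicSum_d_mem_integer hk))
    (natCast_mem _ k)

theorem ratioSlope_mem_integer (H : ReflectionIndex m a d r) (hk : k ≤ a) :
    ratioSlope d r k ∈ (ν).integer :=
  sub_mem (H.harmonicTwoSum_d_mem_integer hk) (H.harmonicTwoSum_r_mem_integer hk)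

theorem coeffSlope_reflect_smodEq (H : ReflectionIndex m a d r) (hk : k ≤ a) :
    coeffSlope d r (a - k) ≡ coeffSlope d r k [SMOD orderGE ν 1] := by
  refine reflect_smodEq_of_diff_antisymm cyclotomicValuation_two (fun k b hkb => ?_) hk
  have ham := H.lt
  have hdvd := H.dvd
  rw [← hkb] at hdvd
  push_cast at hdvd
  have := add_mem
    (harmonicTerm_add_add_one_mem_orderGE (H.not_dvd_add_mul (i := b) (by omega))
      (H.not_dvd_self_add_mul (i := k) (by omega)) (hdvd.trans (dvd_of_eq (by ring))))
    (harmonicTerm_add_add_one_mem_orderGE (H.not_dvd_add_mul (i := k) (by omega))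
      (H.not_dvd_self_add_mul (i := b) (by omega)) (hdvd.trans (dvd_of_eq (by ring))))
  simp only [coeffSlope, harmonicSum, sum_range_succ, Nat.cast_succ]
  convert this using 1
  ring

theorem ratioSlope_reflect_smodEq (H : ReflectionIndex m a d r) (hk : k ≤ a) :
    ratioSlope d r (a - k) ≡ ratioSlope d r k [SMOD orderGE ν 1] := by
  refine reflect_smodEq_of_diff_antisymm cyclotomicValuation_two (fun k b hkb => ?_) hk
  have ham := H.lt
  have hdvd := H.dvd
  rw [← hkb] at hdvd
  push_cast at hdvd
  have := add_mem
    (harmonicTwoTerm_sub_mem_orderGE (H.not_dvd_self_add_mul (i := k) (by omega))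
      (H.not_dvd_add_mul (i := b) (by omega)) (hdvd.trans (dvd_of_eq (by ring))))
    (harmonicTwoTerm_sub_mem_orderGE (H.not_dvd_self_add_mul (i := b) (by omega))
      (H.not_dvd_add_mul (i := k) (by omega)) (hdvd.trans (dvd_of_eq (by ring))))
  simp only [ratioSlope, harmonicTwoSum, sum_range_succ]
  convert this using 1
  ring

theorem sum_lhsTerm_mul_slopes_mem_orderGE (H : ReflectionIndex m a d r) :
    ∑ k ∈ range (a + 1), lhsTerm d r k * (coeffSlope d r k * ratioSlope d r k ^ 2) ∈
      orderGE ν 1 := by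
  refine sum_mem_orderGE_of_reflect_smodEq_neg cyclotomicValuation_two fun k hk => ?_
  have hk' : a - k ≤ a := Nat.sub_le a k
  have slopes := smodEq_mul (H.coeffSlope_reflect_smodEq hk)
    (smodEq_pow (H.ratioSlope_reflect_smodEq hk) (H.ratioSlope_mem_integer hk')
      (H.ratioSlope_mem_integer hk) 2)
    (H.coeffSlope_mem_integer hk') (pow_mem (H.ratioSlope_mem_integer hk) 2)
  rw [← neg_mul]
  exact smodEq_mul (H.lhsTerm_reflect_smodEq hk) slopes (H.lhsTerm_mem_integer _)
    (mul_mem (H.coeffSlope_mem_integer hk) (pow_mem (H.ratioSlope_mem_integer hk) 2))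

section

variable (H : ReflectionIndex m a d r) (hN : (m : ℤ) ∣ N) (hk : k ≤ a)
include H hN hk

theorem evenFactor_mul_inv_smodEq :
    evenFactor d r N k * (evenFactor d d N k)⁻¹ ≡ 1 + evenParameter N * ratioSlope d r k
      [SMOD orderGE ν 4] := by
  rw [ratioSlope, sub_eq_neg_add]
  exact one_add_mul_mul_smodEq (by norm_num) (by norm_num) (by norm_num)
    (evenParameter_mem_orderGE hN) (H.evenFactor_r_smodEq hN hk) (H.inv_evenFactor_d_smodEq hN hk)
    (neg_mem (H.harmonicTwoSum_r_mem_integer hk)) (H.harmonicTwoSum_d_mem_integer hk)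

theorem evenFactor_mul_inv_sub_one_mem :
    evenFactor d r N k * (evenFactor d d N k)⁻¹ - 1 ∈ orderGE ν 2 :=
  sub_one_mem_orderGE_two_of_smodEq hN (H.ratioSlope_mem_integer hk)
    (H.evenFactor_mul_inv_smodEq hN hk)

theorem sq_evenFactor_mul_inv_sub_one_smodEq :
    (evenFactor d r N k * (evenFactor d d N k)⁻¹ - 1) ^ 2 ≡
      (evenParameter N * ratioSlope d r k) ^ 2 [SMOD orderGE ν 6] := by
  have := mul_mem_orderGE (SModEq.sub_mem.1 (H.evenFactor_mul_inv_smodEq hN hk))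
    (add_mem (H.evenFactor_mul_inv_sub_one_mem hN hk)
      (mul_integer_mem_orderGE (evenParameter_mem_orderGE hN) (H.ratioSlope_mem_integer hk)))
    (by norm_num : (6 : ℤ) ≤ _)
  rw [SModEq.sub_mem]
  convert this using 1
  ring

theorem shiftFactor_mul_smodEq :
    shiftFactor d r (-N) k * (shiftFactor d d N k)⁻¹ * q ^ (N * k) ≡
      1 + (q ^ N - 1) * coeffSlope d r k [SMOD orderGE ν 2] := by
  have δ_mem := q_zpow_sub_one_mem_orderGE hN
  have ham := H.lt
  have int_r := H.harmonicSum_r_mem_integer hk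
  have int_d := H.harmonicSum_d_mem_integer hk
  refine one_add_mul_mul_smodEq (by norm_num) (by norm_num) (by norm_num) δ_mem
    (one_add_mul_mul_smodEq (by norm_num) (by norm_num) (by norm_num) δ_mem
      (shiftFactor_neg_smodEq hN fun _ hi => H.not_dvd_add_mul (hi.trans_le hk))
      (inv_shiftFactor_smodEq hN fun _ hi => H.not_dvd_self_add_mul (by omega)) int_r int_d)
    (q_zpow_mul_natCast_smodEq hN k) (add_mem int_r int_d) (natCast_mem _ k)

theorem deformedCoeff_sub_mul_sq_smodEq :
    (deformedCoeff d r 0 k - deformedCoeff d r (-N) k) *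
        (evenRatio d r N k - evenRatio d r 0 k) ^ 2 ≡
      -((q ^ N - 1) * evenParameter N ^ 2) *
        (lhsTerm d r k * (coeffSlope d r k * ratioSlope d r k ^ 2)) [SMOD orderGE ν 6] := by
  set w := evenFactor d r N k * (evenFactor d d N k)⁻¹ with hw
  set c := shiftFactor d r (-N) k * (shiftFactor d d N k)⁻¹ * q ^ (N * k) with hc
  have w_sq_mem : (w - 1) ^ 2 ∈ orderGE ν 4 := by
    have w_mem := H.evenFactor_mul_inv_sub_one_mem hN hk
    rw [pow_two]
    exact mul_mem_orderGE w_mem w_mem (by norm_num)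
  have δ_mul_mem : (q ^ N - 1) * coeffSlope d r k ∈ (ν).integer :=
    mul_mem (sub_mem (q_zpow_mem_integer N) (one_mem _)) (H.coeffSlope_mem_integer hk)
  have error_coeff : (w - 1) ^ 2 * (c - (1 + (q ^ N - 1) * coeffSlope d r k)) ∈ orderGE ν 6 :=
    mul_mem_orderGE w_sq_mem (SModEq.sub_mem.1 (H.shiftFactor_mul_smodEq hN hk)) (by norm_num)
  have error_ratio := mul_integer_mem_orderGE
    (SModEq.sub_mem.1 (H.sq_evenFactor_mul_inv_sub_one_smodEq hN hk)) δ_mul_mem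
  have error := neg_mem
    (integer_mul_mem_orderGE (H.lhsTerm_mem_integer k) (add_mem error_coeff error_ratio))
  rw [SModEq.sub_mem, deformedCoeff_neg_eq_mul H.add_mul_ne_zero H.self_add_mul_ne_zero,
    evenRatio_eq_mul H.add_mul_ne_zero H.self_add_mul_ne_zero, ← hw, ← hc]
  convert error using 1
  rw [← deformedCoeff_zero_mul]
  ring

end

theorem secondDifference_zero_smodEq (H : ReflectionIndex m a d r) (hN : (m : ℤ) ∣ N) :
    secondDifference d r a N 0 ≡ secondDifference d r a N (-N) [SMOD orderGE ν 6] := by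
  have δ_mem := q_zpow_sub_one_mem_orderGE hN
  have ε_mem := evenParameter_mem_orderGE hN
  have ε_sq_mem : evenParameter N ^ 2 ∈ orderGE ν 4 := by
    rw [pow_two]
    exact mul_mem_orderGE ε_mem ε_mem (by norm_num)
  have factor_mem : -((q ^ N - 1) * evenParameter N ^ 2) ∈ orderGE ν 5 :=
    neg_mem (mul_mem_orderGE δ_mem ε_sq_mem (by norm_num))
  have termwise : secondDifference d r a N 0 - secondDifference d r a N (-N) ≡
      ∑ k ∈ range (a + 1), -((q ^ N - 1) * evenParameter N ^ 2) *
        (lhsTerm d r k * (coeffSlope d r k * ratioSlope d r k ^ 2)) [SMOD orderGE ν 6] := by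
    simp only [secondDifference, ← sum_sub_distrib, ← sub_mul]
    exact SModEq.sum fun k hk => H.deformedCoeff_sub_mul_sq_smodEq hN (mem_range_succ_iff.1 hk)
  rw [← mul_sum] at termwise
  exact SModEq.sub_mem.2 (mem_orderGE_of_smodEq termwise
    (mul_mem_orderGE factor_mem H.sum_lhsTerm_mul_slopes_mem_orderGE (by norm_num)))

theorem secondDifference_neg_N_mem_orderGE (H : ReflectionIndex m a d r) (hN : N = d * a + r)
    (hma : 2 * m ≤ 3 * a + 1) : secondDifference d r a N (-N) ∈ orderGE ν 6 := by
  have ham := H.lt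
  have hdvd : (m : ℤ) ∣ N := hN ▸ H.dvd
  have unit_r {k : ℕ} (hk : k ≤ a) : ν (qzpoch d r k) = 1 := H.valuation_qzpoch (by simp) hk
  have unit_d {k : ℕ} (hk : k ≤ a) : ν (qzpoch d d k) = 1 :=
    H.valuation_qzpoch_self (by simp) (hk.trans_lt ham)
  have factor_mem : qzpoch d (d - r) a ∈ orderGE ν 1 :=
    mem_orderGE_of_eq (H.valuation_qzpoch_sub a)
      (by rw [Nat.mod_eq_of_lt ham, Nat.div_eq_of_lt ham, if_pos (by omega)]; norm_num)
  have prefactor_mem : qint N * (qzpoch d r a * qzpoch d (d - r) a) ∈ orderGE ν 2 :=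
    mul_mem_orderGE (qint_mem_orderGE H.one_lt hdvd)
      (integer_mul_mem_orderGE (mem_integer_of_eq_one (unit_r le_rfl)) factor_mem) (by norm_num)
  rw [H.secondDifference_neg_N_eq hN]
  refine sum_mem fun k hk => ?_
  have hk : k ≤ a := mem_range_succ_iff.1 hk
  have inv_a_mem := H.inv_evenFactor_d_sub_one_mem hdvd le_rfl
  have ratio_mem : evenFactor d r N k * (evenFactor d d N a)⁻¹ - 1 ∈ orderGE ν 2 := by
    have := add_mem (mul_integer_mem_orderGE (H.evenFactor_r_sub_one_mem hdvd hk)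
      (mem_integer_of_sub_one_mem inv_a_mem)) inv_a_mem
    convert this using 1
    ring
  have inv_sq_mem {k : ℕ} (hk : k ≤ a) : (qzpoch d d k ^ 2)⁻¹ ∈ (ν).integer :=
    inv_mem_integer (by rw [map_pow, unit_d hk, one_pow])
  exact mul_mem_orderGE
    (mul_integer_mem_orderGE
      (mul_integer_mem_orderGE prefactor_mem (H.negWatsonCoeff_mem_integer hN hma hk))
      (mul_mem (mul_mem (inv_sq_mem le_rfl)
        (pow_mem (mem_integer_of_eq_one (unit_r hk)) 2)) (inv_sq_mem hk)))
    (mul_mem_orderGE ratio_mem (H.inv_evenFactor_d_sub_one_mem hdvd hk) le_rfl) (by norm_num)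

end ReflectionIndex

end SecondDifference

section Congruence

namespace ReflectionIndex

theorem sum_lhsTerm_smodEq_rhsSum {m a : ℕ} [NeZero m] {d r N : ℤ} (H : ReflectionIndex m a d r)
    (hN : N = d * a + r) (hma : 2 * m ≤ 3 * a + 1) :
    ∑ k ∈ range (a + 1), lhsTerm d r k ≡ rhsSum d r a N
      [SMOD orderGE (cyclotomicValuation m) 6] := by
  have second_difference : secondDifference d r a N 0 ∈ orderGE (cyclotomicValuation m) 6 :=
    mem_orderGE_of_smodEq (H.secondDifference_zero_smodEq (hN ▸ H.dvd))
      (H.secondDifference_neg_N_mem_orderGE hN hma)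
  have := add_mem (SModEq.sub_mem.1 (H.two_mul_deformedSum_sub_smodEq hN hma)) second_difference
  rw [SModEq.sub_mem, ← deformedSum_zero]
  convert this using 1
  rw [secondDifference_eq, deformedSum_comm d r a 0 N]
  ring

theorem of_dvd {n a m : ℕ} {d r : ℤ} (H : ReflectionIndex n a d r) (hmn : m ∣ n) (hm : 1 < m) :
    ReflectionIndex m (a % m) d r where
  three_le := H.three_le
  coprime_left := H.coprime_left
  coprime_right := H.coprime_right.of_isCoprime_of_dvd_left (Int.natCast_dvd_natCast.2 hmn)
  one_lt := hm
  lt := Nat.mod_lt _ (by omega)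
  dvd := by
    obtain ⟨c, hc⟩ := (Int.natCast_dvd_natCast.2 hmn).trans H.dvd
    have mod_add_div : ((a % m : ℕ) : ℤ) + m * (a / m : ℕ) = a := mod_cast Nat.mod_add_div a m
    exact ⟨c - d * (a / m : ℕ), by linear_combination hc + d * mod_add_div⟩

variable {n a : ℕ} {d r N : ℤ} (H : ReflectionIndex n a d r)
include H

theorem sum_lhsTerm_range_smodEq {M : ℕ} [NeZero n] (hM : M = a ∨ M = n - 1) :
    ∑ k ∈ range (M + 1), lhsTerm d r k ≡ ∑ k ∈ range (a + 1), lhsTerm d r k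
      [SMOD orderGE (cyclotomicValuation n) 6] := by
  have han := H.lt
  rw [SModEq.sub_mem, ← sum_range_add_sum_Ico _ (by omega : a + 1 ≤ M + 1), add_sub_cancel_left]
  refine sum_mem fun k hk => ?_
  obtain ⟨hak, hkM⟩ := mem_Ico.1 hk
  exact H.lhsTerm_mem_orderGE_six hak (by omega)

theorem sum_lhsTerm_mem_orderGE_of_dvd {m M : ℕ} [NeZero m] (hmn : m ∣ n) (hm : 1 < m)
    (hM : M = a ∨ M = n - 1) :
    ∑ k ∈ range (M + 1), lhsTerm d r k ∈ orderGE (cyclotomicValuation m) 1 := by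
  rcases hM with rfl | rfl
  · simpa only [Nat.div_add_mod'] using
      (H.of_dvd hmn hm).sum_lhsTerm_range_mul_add_mem_orderGE (M / m)
  · have := (H.of_dvd hmn hm).sum_lhsTerm_range_mul_mem_orderGE (n / m)
    rwa [Nat.div_mul_cancel hmn, ← Nat.sub_add_cancel H.one_lt.le] at this

theorem rhsSum_mem_orderGE_of_dvd {m : ℕ} [NeZero m] (hN : N = d * a + r) (hmn : m ∣ n)
    (hm : 1 < m) : rhsSum d r a N ∈ orderGE (cyclotomicValuation m) 1 := by
  have hdvd : (m : ℤ) ∣ N := hN ▸ (Int.natCast_dvd_natCast.2 hmn).trans H.dvd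
  simpa only [Nat.div_add_mod'] using (H.of_dvd hmn hm).rhsSum_mem_orderGE (a / m) hdvd

theorem qcong_sum_lhsTerm_rhsSum {M : ℕ} (hN : N = d * a + r) (hna : 2 * n ≤ 3 * a + 1)
    (hM : M = a ∨ M = n - 1) :
    qcong (∑ k ∈ range (M + 1), lhsTerm d r k) (rhsSum d r a N)
      ((∑ i ∈ range n, Polynomial.X ^ i) * Polynomial.cyclotomic n ℚ ^ 5) := by
  have : NeZero n := ⟨by have := H.one_lt; omega⟩
  refine qcong_geom_sum_mul_cyclotomic_pow H.one_lt 5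
    ((H.sum_lhsTerm_range_smodEq hM).trans (H.sum_lhsTerm_smodEq_rhsSum hN hna))
    fun m _ hmn hm _ => SModEq.sub_mem.2 ?_
  exact sub_mem (H.sum_lhsTerm_mem_orderGE_of_dvd hmn hm hM) (H.rhsSum_mem_orderGE_of_dvd hN hmn hm)

end ReflectionIndex

theorem qpoch_q_pow (d k : ℕ) : qpoch (q ^ d) (q ^ d) k = qzpoch d d k := by
  rw [← qpoch_zpow, zpow_natCast]

theorem correctionSum_eq_sum_Icc (d r : ℤ) (k : ℕ) :
    correctionSum d r k = ∑ j ∈ Icc 1 k,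
      (q ^ (d * j) / qint (d * j) ^ 2 + q ^ (d * j - d + r) / qint (d * j - d + r) ^ 2) := by
  rw [← Ico_add_one_right_eq_Icc, sum_Ico_eq_sum_range, Nat.add_sub_cancel, correctionSum]
  refine sum_congr rfl fun j _ => ?_
  rw [show d * ((1 + j : ℕ) : ℤ) = d + d * j by push_cast; ring,
    show d + d * (j : ℤ) - d + r = r + d * j by ring]

theorem lhsTerm_eq_qpoch (d : ℕ) (r : ℤ) (k : ℕ) :
    lhsTerm d r k = qint (2 * d * k + r) *
      (qpoch (q ^ r) (q ^ d) k ^ 6 / qpoch (q ^ d) (q ^ d) k ^ 6) *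
        q ^ ((2 * (d : ℤ) - 3 * r) * k) := by
  rw [lhsTerm, qzpochRatio, div_pow, qpoch_zpow, qpoch_q_pow]

theorem rhsTerm_eq_qpoch (d : ℕ) (r : ℤ) (k : ℕ) :
    rhsTerm d r k =
      qpoch (q ^ r) (q ^ d) k ^ 3 * qpoch (q ^ ((d : ℤ) - r)) (q ^ d) k * q ^ (d * k) /
        (qpoch (q ^ d) (q ^ d) k ^ 3 * qpoch (q ^ (2 * r)) (q ^ d) k) := by
  rw [rhsTerm, qpoch_zpow, qpoch_zpow, qpoch_zpow, qpoch_q_pow, ← zpow_natCast q (d * k),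
    Nat.cast_mul]

theorem reflectionIndex_of_mul_eq {n a d : ℕ} {r : ℤ} (hd : 3 ≤ d) (hgcd : Nat.gcd n d = 1)
    (hnr : 0 < n + r) (hn : 1 < n) (ha : (a : ℤ) * d = d * n - n - r) :
    ReflectionIndex n a d r where
  three_le := mod_cast hd
  coprime_left := by
    have := (Nat.isCoprime_iff_coprime.2 hgcd).neg_left.add_mul_right_left (n - a : ℤ)
    rwa [show -(n : ℤ) + (n - a) * d = r by linear_combination -ha] at this
  coprime_right := Nat.isCoprime_iff_coprime.2 hgcd
  one_lt := hn
  lt := by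
    have : (d : ℤ) * (n - a) = n + r := by linear_combination -ha
    have := pos_of_mul_pos_right (this.symm ▸ hnr) (by positivity)
    omega
  dvd := ⟨d - 1, by linear_combination ha⟩

end Congruence

theorem stmt12_general (n d : ℕ) (r : ℤ) (hr : 3 * (n + r) ≤ d * (n + 1))
    (hnd : (d : ℤ) ≤ (n : ℤ) + r) (hd : 3 ≤ d) (hgcd : Nat.gcd n d = 1)
    (m₀ : ℕ) (hm₀ : (m₀ : ℤ) * d = (d : ℤ) * n - n - r)
    (M : ℕ) (hM : M = m₀ ∨ M = n - 1) :
    qcong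
      (∑ k ∈ Finset.range (M + 1),
        qint (2 * d * k + r) * (qpoch (q ^ r) (q ^ d) k ^ 6 / qpoch (q ^ d) (q ^ d) k ^ 6) *
          q ^ ((2 * (d : ℤ) - 3 * r) * k))
      (qint ((d : ℤ) * n - n) * q ^ ((r * (r + (n : ℤ) - d * n)) / d) *
        (qpoch (q ^ (2 * r)) (q ^ d) m₀ / qpoch (q ^ d) (q ^ d) m₀) *
        ∑ k ∈ Finset.range (m₀ + 1),
          (qpoch (q ^ r) (q ^ d) k ^ 3 * qpoch (q ^ ((d : ℤ) - r)) (q ^ d) k * q ^ (d * k) /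
            (qpoch (q ^ d) (q ^ d) k ^ 3 * qpoch (q ^ (2 * r)) (q ^ d) k)) *
          (1 - qint ((d : ℤ) * n - n) ^ 2 * (2 - q ^ ((d : ℤ) * n - n)) *
            ∑ j ∈ Finset.Icc 1 k,
              (q ^ ((d : ℤ) * j) / qint ((d : ℤ) * j) ^ 2 +
                q ^ ((d : ℤ) * j - d + r) / qint ((d : ℤ) * j - d + r) ^ 2)))
      ((∑ i ∈ Finset.range n, Polynomial.X ^ i) * Polynomial.cyclotomic n ℚ ^ 5) := by
  have reflection_length : (d : ℤ) * (n - m₀) = n + r := by linear_combination -hm₀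
  have length_le : 3 * (n - m₀ : ℤ) ≤ n + 1 :=
    le_of_mul_le_mul_left (by linarith : (d : ℤ) * (3 * (n - m₀)) ≤ d * (n + 1)) (by omega)
  have length_pos : 0 < (n - m₀ : ℤ) :=
    pos_of_mul_pos_right (by omega : 0 < (d : ℤ) * (n - m₀)) (by positivity)
  have H : ReflectionIndex n m₀ d r := reflectionIndex_of_mul_eq hd hgcd (by omega) (by omega) hm₀
  have exponent : r * (r + (n : ℤ) - d * n) / d = -r * m₀ :=
    Int.ediv_eq_of_eq_mul_left (by omega) (by linear_combination r * hm₀)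
  have key := H.qcong_sum_lhsTerm_rhsSum (N := d * n - n) (by linear_combination -hm₀) (by omega) hM
  rw [rhsSum, ← qpoch_zpow, ← qpoch_q_pow] at key
  simpa only [lhsTerm_eq_qpoch, rhsTerm_eq_qpoch, correctionSum_eq_sum_Icc, exponent] using key

theorem stmt12 (n d : ℕ) (r : ℤ) (hr : r = 1 ∨ r = -1)
    (hnd : (d : ℤ) ≤ (n : ℤ) + r) (hd : 3 ≤ d) (hgcd : Nat.gcd n d = 1)
    (hmod : (n : ℤ) ≡ -r [ZMOD (d : ℤ)])
    (m₀ : ℕ) (hm₀ : (m₀ : ℤ) * d = (d : ℤ) * n - n - r)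
    (M : ℕ) (hM : M = m₀ ∨ M = n - 1) :
    qcong
      (∑ k ∈ Finset.range (M + 1),
        qint (2 * d * k + r) * (qpoch (q ^ r) (q ^ d) k ^ 6 / qpoch (q ^ d) (q ^ d) k ^ 6) *
          q ^ ((2 * (d : ℤ) - 3 * r) * k))
      (qint ((d : ℤ) * n - n) * q ^ ((r * (r + (n : ℤ) - d * n)) / d) *
        (qpoch (q ^ (2 * r)) (q ^ d) m₀ / qpoch (q ^ d) (q ^ d) m₀) *
        ∑ k ∈ Finset.range (m₀ + 1),
          (qpoch (q ^ r) (q ^ d) k ^ 3 * qpoch (q ^ ((d : ℤ) - r)) (q ^ d) k * q ^ (d * k) /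
            (qpoch (q ^ d) (q ^ d) k ^ 3 * qpoch (q ^ (2 * r)) (q ^ d) k)) *
          (1 - qint ((d : ℤ) * n - n) ^ 2 * (2 - q ^ ((d : ℤ) * n - n)) *
            ∑ j ∈ Finset.Icc 1 k,
              (q ^ ((d : ℤ) * j) / qint ((d : ℤ) * j) ^ 2 +
                q ^ ((d : ℤ) * j - d + r) / qint ((d : ℤ) * j - d + r) ^ 2)))
      ((∑ i ∈ Finset.range n, Polynomial.X ^ i) * Polynomial.cyclotomic n ℚ ^ 5) :=
  stmt12_general n d r (by zify at hd; rcases hr with rfl | rfl <;> nlinarith)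
    hnd hd hgcd m₀ hm₀ M hM
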